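/- arXiv:2102.08476 — 11 statements merged into one kernel-verified Lean document; each statement's English description precedes it below -/
import Mathlib

section
/- Let a and b be positive integers and let W be a finite collection of distinct subsets of a finite universe U, each of cardinality exactly a. Suppose that for every set T ⊆ ψ(W) with |T| ≤ a, the number of sets in W that contain T is at most (b+1)^{a-|T|}, and suppose there exists a set T* ⊆ ψ(W) with |T*| ≤ a for which this bound is tight, i.e., exactly (b+1)^{a-|T*|} sets of W contain T*. Then for every set B ⊆ ψ(W) with B ∩ T* = ∅ and |B| ≤ b, there exists a set Y ∈ W such that T* ⊆ Y and Y ∩ B = ∅. -/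
/-!
The proof is a union bound over `B`. If every member of `W` containing `Tstar` met `B`, these members
would be covered by the families of members containing `insert x Tstar`, for `x ∈ B`. When
`|Tstar| < a`, each such family has at most `(b+1)^(a-|Tstar|-1)` members, so together they have
at most `b * (b+1)^(a-|Tstar|-1) < (b+1)^(a-|Tstar|)` members, contradicting tightness. When
`|Tstar| = a`, the only member containing `Tstar` is `Tstar` itself, which is disjoint from `B`.
-/

/-- Let `a` and `b` be positive integers and let `W` be a finite collection of
distinct subsets of a finite universe `U`, each of cardinality exactly `a`. Suppose that for
every set `T ⊆ ψ(W)` with `|T| ≤ a`, the number of sets in `W` that contain `T` is at most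
`(b+1)^(a-|T|)`, and suppose there exists a set `T* ⊆ ψ(W)` with `|T*| ≤ a` for which this
bound is tight. Then for every set `B ⊆ ψ(W)` with `B ∩ T* = ∅` and `|B| ≤ b`, there exists
a set `Y ∈ W` such that `T* ⊆ Y` and `Y ∩ B = ∅`. -/
theorem stmt_0 {U : Type*} [DecidableEq U] [Fintype U]
    (a b : ℕ) (ha : 0 < a) (hb : 0 < b)
    (W : Finset (Finset U))
    (hWcard : ∀ S ∈ W, S.card = a)
    (hbound : ∀ T : Finset U, T ⊆ W.biUnion id → T.card ≤ a →
      (W.filter (fun S => T ⊆ S)).card ≤ (b + 1) ^ (a - T.card))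
    (Tstar : Finset U) (hTsub : Tstar ⊆ W.biUnion id) (hTcard : Tstar.card ≤ a)
    (htight : (W.filter (fun S => Tstar ⊆ S)).card = (b + 1) ^ (a - Tstar.card)) :
    ∀ B : Finset U, B ⊆ W.biUnion id → B ∩ Tstar = ∅ → B.card ≤ b →
      ∃ Y ∈ W, Tstar ⊆ Y ∧ Y ∩ B = ∅ := by
  intro B hB hdisj hBcard
  by_contra! hcon
  rcases hTcard.lt_or_eq with hlt | heq
  · have hcover : W.filter (fun S => Tstar ⊆ S) ⊆
        B.biUnion (fun x => W.filter (fun S => insert x Tstar ⊆ S)) := by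
      intro S hS
      obtain ⟨hSW, hTS⟩ := Finset.mem_filter.mp hS
      obtain ⟨x, hx⟩ := hcon S hSW hTS
      obtain ⟨hxS, hxB⟩ := Finset.mem_inter.mp hx
      exact Finset.mem_biUnion.mpr
        ⟨x, hxB, Finset.mem_filter.mpr ⟨hSW, Finset.insert_subset hxS hTS⟩⟩
    have heach : ∀ x ∈ B, (W.filter (fun S => insert x Tstar ⊆ S)).card
        ≤ (b + 1) ^ (a - Tstar.card - 1) := by
      intro x hx
      have hxT : x ∉ Tstar := fun h => by
        have hmem := Finset.mem_inter.mpr ⟨hx, h⟩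
        simp [hdisj] at hmem
      have hc := Finset.card_insert_of_notMem hxT
      have h := hbound (insert x Tstar) (Finset.insert_subset (hB hx) hTsub) (by omega)
      rwa [hc, ← Nat.sub_sub] at h
    have hle := (Finset.card_le_card hcover).trans (Finset.card_biUnion_le_card_mul B _ _ heach)
    obtain ⟨k, hk⟩ : ∃ k, a - Tstar.card = k + 1 := ⟨a - Tstar.card - 1, by omega⟩
    rw [htight, hk, Nat.add_sub_cancel, pow_succ] at hle
    have hpos : 0 < (b + 1) ^ k := by positivity
    nlinarith [Nat.mul_le_mul_right ((b + 1) ^ k) hBcard]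
  · have hpos : 0 < (W.filter (fun S => Tstar ⊆ S)).card := by rw [htight]; positivity
    obtain ⟨Y, hY⟩ := Finset.card_pos.mp hpos
    obtain ⟨hYW, hTY⟩ := Finset.mem_filter.mp hY
    have hYT : Tstar = Y := Finset.eq_of_subset_of_card_le hTY (by rw [hWcard Y hYW, heq])
    obtain ⟨x, hx⟩ := hcon Y hYW hTY
    rw [← hYT, Finset.inter_comm, hdisj] at hx
    simp at hx
end

section
/- Let O be a finite collection of distinct subsets of a finite universe U, let S ∈ O, and let Y ⊆ U be a set with |Y| = |S| such that (Y \ S) ∩ ψ(O) = ∅. Then |ψ̃((O \ {S}) ∪ {Y})| ≥ |ψ̃(O)|, i.e., replacing S by Y does not decrease the number of uniquely covered elements. -/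
/-!
Let `P` be the collection obtained from `O` by replacing `S` with `Y`. Only the elements of `S \ Y`
can lose unique coverage: on `S ∩ Y` the set `Y` takes over the role of `S`, and off `S ∪ Y` nothing
changes. Conversely every element of `Y \ S` gains it, since no member of `O` contains such an
element and so `Y` is the only set of `P` covering it. Hence `P` uniquely covers the disjoint
union of `ψ̃(O) \ (S \ Y)` and `Y \ S`, and `|Y \ S| = |S \ Y|` because `|Y| = |S|`.
-/

/-- The set of elements uniquely covered by the collection `C`, i.e., the elements belonging
to exactly one set of `C`. -/
def uniqueCover {U : Type*} [DecidableEq U] (C : Finset (Finset U)) : Finset U :=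
  (C.biUnion id).filter (fun u => (C.filter (fun S => u ∈ S)).card = 1)

/-- The covering condition in `uniqueCover` is implied by the cardinality condition, so membership
amounts to the existence of a unique member of `C` containing `u`. -/
theorem mem_uniqueCover {U : Type*} [DecidableEq U] (C : Finset (Finset U)) (u : U) :
    u ∈ uniqueCover C ↔ ∃ A ∈ C, u ∈ A ∧ ∀ B ∈ C, u ∈ B → B = A := by
  simp only [uniqueCover, Finset.mem_filter, Finset.mem_biUnion, id, Finset.card_eq_one,
    Finset.ext_iff, Finset.mem_singleton]
  constructor
  · rintro ⟨-, A, hA⟩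
    have := (hA A).2 (fun _ => Iff.rfl)
    exact ⟨A, this.1, this.2, fun B hB hu => (hA B).1 ⟨hB, hu⟩⟩
  · rintro ⟨A, hA, hu, h⟩
    refine ⟨⟨A, hA, hu⟩, A, fun B => ⟨fun hB a => by rw [h B hB.1 hB.2], fun hB => ?_⟩⟩
    rw [Finset.ext hB]
    exact ⟨hA, hu⟩

/-- Let `O` be a finite collection of distinct subsets of a finite universe `U`,
let `S ∈ O`, and let `Y ⊆ U` be a set with `|Y| = |S|` such that `(Y \ S) ∩ ψ(O) = ∅`.
Then `|ψ̃((O \ {S}) ∪ {Y})| ≥ |ψ̃(O)|`, i.e., replacing `S` by `Y` does not decrease the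
number of uniquely covered elements. -/
theorem stmt_2 {U : Type*} [DecidableEq U] [Fintype U]
    (O : Finset (Finset U)) (S : Finset U) (hS : S ∈ O)
    (Y : Finset U) (hcard : Y.card = S.card)
    (hdisj : (Y \ S) ∩ O.biUnion id = ∅) :
    (uniqueCover (insert Y (O.erase S))).card ≥ (uniqueCover O).card := by
  have hnew : ∀ u ∈ Y \ S, ∀ A ∈ O, u ∉ A := by
    intro u hu A hA huA
    have : u ∈ (Y \ S) ∩ O.biUnion id :=
      Finset.mem_inter.2 ⟨hu, Finset.mem_biUnion.2 ⟨A, hA, huA⟩⟩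
    simp [hdisj] at this
  have hsub : (uniqueCover O \ (S \ Y)) ∪ (Y \ S) ⊆ uniqueCover (insert Y (O.erase S)) := by
    intro u hu
    rw [mem_uniqueCover]
    rcases Finset.mem_union.1 hu with h | h
    · obtain ⟨h1, h2⟩ := Finset.mem_sdiff.1 h
      obtain ⟨A, hA, huA, hun⟩ := (mem_uniqueCover O u).1 h1
      by_cases huY : u ∈ Y
      · by_cases huS : u ∈ S
        · exact ⟨Y, by grind⟩
        · exact absurd huA (hnew u (by simp [huY, huS]) A hA)
      · exact ⟨A, by grind⟩
    · exact ⟨Y, by grind⟩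
  have hdj : Disjoint (uniqueCover O \ (S \ Y)) (Y \ S) := by
    rw [Finset.disjoint_right]
    intro u hu h
    obtain ⟨A, hA, huA, -⟩ := (mem_uniqueCover O u).1 (Finset.mem_sdiff.1 h).1
    exact hnew u hu A hA huA
  have h1 := Finset.card_le_card hsub
  rw [Finset.card_union_of_disjoint hdj] at h1
  -- It remains to see that `#(S \ Y) = #(Y \ S)`, both being `#S - #(S ∩ Y)`.
  have h2 := Finset.le_card_sdiff (S \ Y) (uniqueCover O)
  have h3 := Finset.card_sdiff_add_card_inter S Y
  have h4 := Finset.card_sdiff_add_card_inter Y S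
  rw [Finset.inter_comm] at h4
  omega
end

section
/- Let d ≥ 1 and k ≥ 1 be integers, let 1 ≤ a ≤ d, and set b = d(k-1). Let X be a finite collection of distinct subsets of a finite universe U, each of cardinality exactly a, such that for every T ⊆ U with |T| ≤ a, the number of sets in X containing T is at most (b+1)^{a-|T|}. Let O be a collection of at most k distinct subsets of U, each of cardinality at most d, and let S ∈ O with |S| = a. Suppose there exists T* ⊆ S such that exactly (b+1)^{a-|T*|} sets of X contain T*. Then there exists Y ∈ X such that |ψ((O \ {S}) ∪ {Y})| ≥ |ψ(O)|. -/
/-!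
Write `V` for the union of `O \ {S}`; it has at most `b = d (k - 1)` elements. It suffices to find
`Y ∈ X` containing `T*` that meets `V` only inside `T*`: then `|Y ∩ V| ≤ |S ∩ V|`, and as
`|Y| = |S|`, `Y` covers at least as many elements outside `V` as `S` does.

Such a `Y` exists by a union bound (`exists_superset_disjoint`). If `|T*| < a`, then for each
`v ∈ V \ T*` at most `(b+1)^(a-|T*|-1)` sets of `X` contain `T* ∪ {v}`, so at most
`b (b+1)^(a-|T*|-1) < (b+1)^(a-|T*|)` sets containing `T*` meet `V \ T*`. If `|T*| = a`, the unique
set of `X` containing `T*` is `T*` itself.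
-/

/-- When the degree bound is tight at `T`, some member of `X` contains `T` and avoids `V \ T`,
for any `V` with at most `b` elements. -/
theorem exists_superset_disjoint {U : Type*} [DecidableEq U] (a b : ℕ)
    (X : Finset (Finset U)) (hXcard : ∀ S ∈ X, S.card = a)
    (hbound : ∀ T : Finset U, T.card ≤ a →
      (X.filter (fun S => T ⊆ S)).card ≤ (b + 1) ^ (a - T.card))
    (T : Finset U) (hTa : T.card ≤ a)
    (htight : (X.filter (fun Y => T ⊆ Y)).card = (b + 1) ^ (a - T.card))
    (V : Finset U) (hV : V.card ≤ b) :
    ∃ Y ∈ X, T ⊆ Y ∧ Y ∩ V ⊆ T := by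
  rcases hTa.eq_or_lt with h | h
  · have hpos : 0 < (X.filter (fun Y => T ⊆ Y)).card := by rw [htight]; positivity
    obtain ⟨Y, hY⟩ := Finset.card_pos.mp hpos
    obtain ⟨hYX, hTY⟩ := Finset.mem_filter.mp hY
    have hEq : T = Y := Finset.eq_of_subset_of_card_le hTY (by rw [hXcard Y hYX, h])
    exact ⟨Y, hYX, hTY, hEq ▸ Finset.inter_subset_left⟩
  · by_contra! hcon
    have hsub : X.filter (fun Y => T ⊆ Y) ⊆
        (V \ T).biUnion (fun v => X.filter (fun Y => insert v T ⊆ Y)) := by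
      intro Y hY
      obtain ⟨hYX, hTY⟩ := Finset.mem_filter.mp hY
      obtain ⟨v, hv, hvT⟩ := Finset.not_subset.mp (hcon Y hYX hTY)
      obtain ⟨hvY, hvV⟩ := Finset.mem_inter.mp hv
      exact Finset.mem_biUnion.mpr ⟨v, Finset.mem_sdiff.mpr ⟨hvV, hvT⟩,
        Finset.mem_filter.mpr ⟨hYX, Finset.insert_subset hvY hTY⟩⟩
    have hle : (X.filter (fun Y => T ⊆ Y)).card ≤ (V \ T).card * (b + 1) ^ (a - T.card - 1) := by
      refine (Finset.card_le_card hsub).trans (Finset.card_biUnion_le_card_mul _ _ _ ?_)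
      intro v hv
      have hc := Finset.card_insert_of_notMem (Finset.mem_sdiff.mp hv).2
      have := hbound (insert v T) (by omega)
      rwa [hc, ← Nat.sub_sub] at this
    have hVT : (V \ T).card ≤ b := (Finset.card_le_card Finset.sdiff_subset).trans hV
    obtain ⟨n, hn⟩ : ∃ n, a - T.card = n + 1 := ⟨a - T.card - 1, by omega⟩
    rw [htight, hn, Nat.add_sub_cancel, pow_succ'] at hle
    have := Nat.le_of_mul_le_mul_right hle (by positivity)
    omega

/-- Let `d ≥ 1` and `k ≥ 1` be integers, let `1 ≤ a ≤ d`, and set `b = d(k-1)`.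
Let `X` be a finite collection of distinct subsets of a finite universe `U`, each of
cardinality exactly `a`, such that for every `T ⊆ U` with `|T| ≤ a`, the number of sets in
`X` containing `T` is at most `(b+1)^(a-|T|)`. Let `O` be a collection of at most `k`
distinct subsets of `U`, each of cardinality at most `d`, and let `S ∈ O` with `|S| = a`.
Suppose there exists `T* ⊆ S` such that exactly `(b+1)^(a-|T*|)` sets of `X` contain `T*`.
Then there exists `Y ∈ X` such that `|ψ((O \ {S}) ∪ {Y})| ≥ |ψ(O)|`. -/
theorem stmt_3 {U : Type*} [DecidableEq U] [Fintype U]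
    (d k a b : ℕ) (hd : 1 ≤ d) (hk : 1 ≤ k) (ha : 1 ≤ a) (had : a ≤ d)
    (hb : b = d * (k - 1))
    (X : Finset (Finset U)) (hXcard : ∀ S ∈ X, S.card = a)
    (hbound : ∀ T : Finset U, T.card ≤ a →
      (X.filter (fun S => T ⊆ S)).card ≤ (b + 1) ^ (a - T.card))
    (O : Finset (Finset U)) (hOk : O.card ≤ k) (hOd : ∀ A ∈ O, A.card ≤ d)
    (S : Finset U) (hSO : S ∈ O) (hSa : S.card = a)
    (Tstar : Finset U) (hTsub : Tstar ⊆ S)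
    (htight : (X.filter (fun Y => Tstar ⊆ Y)).card = (b + 1) ^ (a - Tstar.card)) :
    ∃ Y ∈ X, ((insert Y (O.erase S)).biUnion id).card ≥ (O.biUnion id).card := by
  set V := (O.erase S).biUnion id with hVdef
  have hV : V.card ≤ b := by
    have h1 : V.card ≤ (O.erase S).card * d :=
      Finset.card_biUnion_le_card_mul _ _ _ fun A hA => hOd A (Finset.mem_of_mem_erase hA)
    rw [Finset.card_erase_of_mem hSO] at h1
    rw [hb, mul_comm]
    exact h1.trans (Nat.mul_le_mul_right d (by omega))
  obtain ⟨Y, hYX, -, hYV⟩ := exists_superset_disjoint a b X hXcard hbound Tstar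
    (hSa ▸ Finset.card_le_card hTsub) htight V hV
  refine ⟨Y, hYX, ?_⟩
  have hO : O.biUnion id = S ∪ V := by
    rw [← Finset.insert_erase hSO, Finset.biUnion_insert, id, hVdef]
  rw [hO, Finset.biUnion_insert, id, ← hVdef]
  have hint : (Y ∩ V).card ≤ (S ∩ V).card := Finset.card_le_card
    (Finset.subset_inter (hYV.trans hTsub) Finset.inter_subset_right)
  have h1 := Finset.card_union_add_card_inter Y V
  have h2 := Finset.card_union_add_card_inter S V
  have h3 := hXcard Y hYX
  omega
end

section
/- Let d ≥ 1 and k ≥ 1 be integers, let 1 ≤ a ≤ d, and set b = d(k-1). Let X be a finite collection of distinct subsets of a finite universe U, each of cardinality exactly a, such that for every T ⊆ U with |T| ≤ a, the number of sets in X containing T is at most (b+1)^{a-|T|}. Let O be a collection of at most k distinct subsets of U, each of cardinality at most d, and let S ∈ O with |S| = a. Suppose there exists T* ⊆ S such that exactly (b+1)^{a-|T*|} sets of X contain T*. Then there exists Y ∈ X such that |ψ̃((O \ {S}) ∪ {Y})| ≥ |ψ̃(O)|. -/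
/-- An element of `A` is uniquely covered iff `C` misses it; for other elements `A` is irrelevant. -/
theorem card_uniqueCover_insert {U : Type*} [DecidableEq U] (C : Finset (Finset U)) (A : Finset U)
    (hA : A ∉ C) :
    (uniqueCover (insert A C)).card = (A \ C.biUnion id).card + (uniqueCover C \ A).card := by
  rw [← Finset.card_union_of_disjoint]
  · congr 1
    ext u
    by_cases hu : u ∈ A
    · have hA' : A ∉ C.filter (fun S => u ∈ S) := fun h => hA (Finset.mem_filter.1 h).1
      simp only [uniqueCover, Finset.mem_filter, Finset.mem_union, Finset.mem_sdiff,
        Finset.filter_insert, hu, if_true, Finset.card_insert_of_notMem hA', Finset.biUnion_insert,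
        id, true_or, true_and, not_true, and_false, or_false]
      simp
    · simp only [uniqueCover, Finset.mem_filter, Finset.mem_union, Finset.mem_sdiff,
        Finset.filter_insert, hu, if_false, Finset.biUnion_insert, id, false_or, false_and,
        not_false_iff, and_true]
  · rw [Finset.disjoint_left]
    intro u h1 h2
    exact (Finset.mem_sdiff.1 h2).2 (Finset.mem_sdiff.1 h1).1

/-- If the degree bound is tight at `T` and `|T| < a`, then for any `W` with at most `b`
elements some set of `X` containing `T` meets `W` only inside `T`, by the union bound over `W \ T`. -/
theorem exists_superset_inter_subset {U : Type*} [DecidableEq U] (a b : ℕ) (X : Finset (Finset U))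
    (hbound : ∀ T : Finset U, T.card ≤ a →
      (X.filter (fun S => T ⊆ S)).card ≤ (b + 1) ^ (a - T.card))
    (T : Finset U) (hT : T.card < a)
    (htight : (X.filter (fun Y => T ⊆ Y)).card = (b + 1) ^ (a - T.card))
    (W : Finset U) (hW : W.card ≤ b) : ∃ Y ∈ X, T ⊆ Y ∧ Y ∩ W ⊆ T := by
  by_contra! hcon
  have hsub : X.filter (fun Y => T ⊆ Y) ⊆
      (W \ T).biUnion (fun w => X.filter (fun Y => insert w T ⊆ Y)) := by
    intro Y hY
    obtain ⟨hYX, hTY⟩ := Finset.mem_filter.1 hY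
    obtain ⟨w, hw, hwT⟩ := Finset.not_subset.1 (hcon Y hYX hTY)
    obtain ⟨hwY, hwW⟩ := Finset.mem_inter.1 hw
    exact Finset.mem_biUnion.2 ⟨w, Finset.mem_sdiff.2 ⟨hwW, hwT⟩,
      Finset.mem_filter.2 ⟨hYX, Finset.insert_subset hwY hTY⟩⟩
  have h1 : (X.filter (fun Y => T ⊆ Y)).card ≤ (W \ T).card * (b + 1) ^ (a - T.card - 1) := by
    refine (Finset.card_le_card hsub).trans (Finset.card_biUnion_le_card_mul _ _ _ ?_)
    intro w hw
    have hc := Finset.card_insert_of_notMem (Finset.mem_sdiff.1 hw).2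
    have := hbound (insert w T) (by omega)
    rwa [hc, ← Nat.sub_sub] at this
  have h2 : (W \ T).card ≤ b := (Finset.card_le_card Finset.sdiff_subset).trans hW
  have h3 : (b + 1) ^ (a - T.card) = (b + 1) ^ (a - T.card - 1) * (b + 1) := by
    rw [← pow_succ]
    congr 1
    omega
  have h4 : 0 < (b + 1) ^ (a - T.card - 1) := by positivity
  rw [htight, h3] at h1
  nlinarith [Nat.mul_le_mul_right ((b + 1) ^ (a - T.card - 1)) h2]

/-- Let `d ≥ 1` and `k ≥ 1` be integers, let `1 ≤ a ≤ d`, and set `b = d(k-1)`.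
Let `X` be a finite collection of distinct subsets of a finite universe `U`, each of
cardinality exactly `a`, such that for every `T ⊆ U` with `|T| ≤ a`, the number of sets in
`X` containing `T` is at most `(b+1)^(a-|T|)`. Let `O` be a collection of at most `k`
distinct subsets of `U`, each of cardinality at most `d`, and let `S ∈ O` with `|S| = a`.
Suppose there exists `T* ⊆ S` such that exactly `(b+1)^(a-|T*|)` sets of `X` contain `T*`.
Then there exists `Y ∈ X` such that `|ψ̃((O \ {S}) ∪ {Y})| ≥ |ψ̃(O)|`. -/
theorem stmt_4 {U : Type*} [DecidableEq U] [Fintype U]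
    (d k a b : ℕ) (hd : 1 ≤ d) (hk : 1 ≤ k) (ha : 1 ≤ a) (had : a ≤ d)
    (hb : b = d * (k - 1))
    (X : Finset (Finset U)) (hXcard : ∀ S ∈ X, S.card = a)
    (hbound : ∀ T : Finset U, T.card ≤ a →
      (X.filter (fun S => T ⊆ S)).card ≤ (b + 1) ^ (a - T.card))
    (O : Finset (Finset U)) (hOk : O.card ≤ k) (hOd : ∀ A ∈ O, A.card ≤ d)
    (S : Finset U) (hSO : S ∈ O) (hSa : S.card = a)
    (Tstar : Finset U) (hTsub : Tstar ⊆ S)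
    (htight : (X.filter (fun Y => Tstar ⊆ Y)).card = (b + 1) ^ (a - Tstar.card)) :
    ∃ Y ∈ X, (uniqueCover (insert Y (O.erase S))).card ≥ (uniqueCover O).card := by
  rcases (Finset.card_le_card hTsub).lt_or_eq with hlt | heq
  · rw [hSa] at hlt
    have hW : ((O.erase S).biUnion id).card ≤ b := by
      have h := Finset.card_biUnion_le_card_mul (O.erase S) id d
        (fun A hA => hOd A (Finset.mem_of_mem_erase hA))
      rw [Finset.card_erase_of_mem hSO, Nat.mul_comm] at h
      rw [hb]
      exact h.trans (Nat.mul_le_mul_left d (Nat.sub_le_sub_right hOk 1))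
    obtain ⟨Y, hYX, hTY, hYW⟩ :=
      exists_superset_inter_subset a b X hbound Tstar hlt htight _ hW
    refine ⟨Y, hYX, ?_⟩
    have hYa := hXcard Y hYX
    -- A member of `O \ {S}` lies inside the covered set, hence inside `Tstar`, which is too small.
    have hYO : Y ∉ O.erase S := by
      intro hY
      have hYT : Y ⊆ Tstar := fun u hu =>
        hYW (Finset.mem_inter.2 ⟨hu, Finset.mem_biUnion.2 ⟨Y, hY, hu⟩⟩)
      have := Finset.card_le_card hYT
      omega
    have hO := card_uniqueCover_insert (O.erase S) S (Finset.notMem_erase S O)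
    rw [Finset.insert_erase hSO] at hO
    rw [hO, card_uniqueCover_insert _ _ hYO]
    refine Nat.add_le_add ?_ (Finset.card_le_card ?_)
    · have h1 := Finset.card_sdiff_add_card_inter S ((O.erase S).biUnion id)
      have h2 := Finset.card_sdiff_add_card_inter Y ((O.erase S).biUnion id)
      have h3 : (Y ∩ (O.erase S).biUnion id).card ≤ (S ∩ (O.erase S).biUnion id).card :=
        Finset.card_le_card
          (Finset.subset_inter (hYW.trans hTsub) Finset.inter_subset_right)
      omega
    · intro u hu
      obtain ⟨hu1, hu2⟩ := Finset.mem_sdiff.1 hu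
      refine Finset.mem_sdiff.2 ⟨hu1, fun huY => hu2 (hTsub (hYW ?_))⟩
      exact Finset.mem_inter.2 ⟨huY, (Finset.mem_filter.1 hu1).1⟩
  · have hTS : Tstar = S := Finset.eq_of_subset_of_card_le hTsub heq.ge
    subst hTS
    rw [hSa, Nat.sub_self, pow_zero] at htight
    obtain ⟨Y, hY⟩ := Finset.card_pos.1 (by omega : 0 < (X.filter (fun Y => Tstar ⊆ Y)).card)
    obtain ⟨hYX, hTY⟩ := Finset.mem_filter.1 hY
    have hYT : Tstar = Y :=
      Finset.eq_of_subset_of_card_le hTY (by rw [hXcard Y hYX, hSa])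
    exact ⟨Y, hYX, by rw [← hYT, Finset.insert_erase hSO]⟩
end

section
/- Fix integers d ≥ 1 and k ≥ 1 and set b = d(k-1). Let S₁, S₂, ..., Sₘ be a sequence of distinct subsets of a finite universe U, each of cardinality at least 1 and at most d. Define collections X₀ = ∅ and, for i = 1, ..., m: X_i = X_{i-1} ∪ {S_i} if there is no T ⊆ S_i such that at least (b+1)^{d-|T|} sets Y ∈ X_{i-1} satisfy |Y| = |S_i| and T ⊆ Y; otherwise X_i = X_{i-1}. Then f_k(X_m) = f_k({S₁, ..., Sₘ}) and g_k(X_m) = g_k({S₁, ..., Sₘ}); that is, the retained collection X_m contains an optimal solution to both Max Coverage and Max Unique Coverage on the full input. -/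
/-!
Write `B` for the union of at most `k - 1` sets of size at most `d`, so `|B| ≤ b`. If `S` is
discarded because of `T ⊆ S`, some retained `Y ⊇ T` with `|Y| = |S|` satisfies `Y ∩ B ⊆ S`, and
exchanging `S` for `Y` in a solution whose other sets have union `B` loses neither coverage nor
unique coverage: `Y` has at least as many elements outside `B` as `S`, and spoils no uniquely
covered element that `S` did not already spoil. Exchanging the discarded sets one by one gives an
optimal solution among the retained sets.

Such a `Y` exists by counting. The retention rule keeps the number of retained sets of a given size
that contain a given `T'` at most `(b+1)^(d-|T'|)`, for *every* `T'` (`count_le_of_rule`). Hence at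
most `b (b+1)^(d-|T|-1) < (b+1)^(d-|T|)` of the retained `Y ⊇ T` meet `B \ T`, and one of the
others works (`exists_inter_subset`).
-/

section Kernel

variable {U : Type*} [DecidableEq U]

/-- The elements covered by exactly one set of `C`. -/
def uniquelyCovered (C : Finset (Finset U)) : Finset U :=
  (C.biUnion id).filter (fun u => (C.filter (fun S => u ∈ S)).card = 1)

theorem uniquelyCovered_insert {O : Finset (Finset U)} {S : Finset U} (hS : S ∉ O) :
    uniquelyCovered (insert S O) = (uniquelyCovered O \ S) ∪ (S \ O.biUnion id) := by
  ext u
  by_cases hu : u ∈ S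
  · have h1 : S ∉ O.filter (fun S => u ∈ S) := fun h => hS (Finset.mem_filter.1 h).1
    simp [uniquelyCovered, Finset.filter_insert, hu, h1, Finset.filter_eq_empty_iff]
  · simp [uniquelyCovered, Finset.filter_insert, hu]

theorem card_sdiff_le_of_inter_subset {S Y B : Finset U} (hc : Y.card = S.card)
    (h : Y ∩ B ⊆ S) : (S \ B).card ≤ (Y \ B).card := by
  have h1 := Finset.card_sdiff_add_card_inter S B
  have h2 := Finset.card_sdiff_add_card_inter Y B
  have h3 : (Y ∩ B).card ≤ (S ∩ B).card :=
    Finset.card_le_card (Finset.subset_inter h Finset.inter_subset_right)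
  omega

theorem card_uniquelyCovered_exchange {O : Finset (Finset U)} {S Y : Finset U}
    (hS : S ∉ O) (hY : Y ∉ O) (hc : Y.card = S.card) (h : Y ∩ O.biUnion id ⊆ S) :
    (uniquelyCovered (insert S O)).card ≤ (uniquelyCovered (insert Y O)).card := by
  have key : ∀ Z : Finset U, Disjoint (uniquelyCovered O \ Z) (Z \ O.biUnion id) := fun Z =>
    Finset.disjoint_left.2 fun u h1 h2 => (Finset.mem_sdiff.1 h1).2 (Finset.mem_sdiff.1 h2).1
  rw [uniquelyCovered_insert hS, uniquelyCovered_insert hY, Finset.card_union_of_disjoint (key S),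
    Finset.card_union_of_disjoint (key Y)]
  refine Nat.add_le_add (Finset.card_le_card fun u hu => ?_) (card_sdiff_le_of_inter_subset hc h)
  rw [Finset.mem_sdiff] at hu ⊢
  exact ⟨hu.1, fun hy => hu.2 (h (Finset.mem_inter.2 ⟨hy, (Finset.mem_filter.1 hu.1).1⟩))⟩

theorem card_biUnion_exchange {O : Finset (Finset U)} {S Y : Finset U}
    (hc : Y.card = S.card) (h : Y ∩ O.biUnion id ⊆ S) :
    ((insert S O).biUnion id).card ≤ ((insert Y O).biUnion id).card := by
  have e : ∀ Z : Finset U, ((insert Z O).biUnion id).card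
      = (Z \ O.biUnion id).card + (O.biUnion id).card := fun Z => by
    rw [Finset.biUnion_insert, Finset.card_sdiff_add_card]; rfl
  rw [e, e]
  exact Nat.add_le_add_right (card_sdiff_le_of_inter_subset hc h) _

/-- If every set of `A` missing from `X` can be exchanged against any `B` with `|B| ≤ d (k - 1)`,
and exchanges do not decrease the score `F`, then `X` contains a solution scoring at least as
well as any given solution in `A`. -/
theorem exists_solution_in_kernel {d k : ℕ} {A X : Finset (Finset U)}
    (hd : ∀ S ∈ A, S.card ≤ d) (hXA : X ⊆ A)
    (hex : ∀ S ∈ A, S ∉ X → ∀ B : Finset U, B.card ≤ d * (k - 1) →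
      ∃ Y ∈ X, Y.card = S.card ∧ Y ∩ B ⊆ S)
    (F : Finset (Finset U) → ℕ)
    (hF : ∀ (O : Finset (Finset U)) (S Y : Finset U), S ∉ O → Y ∉ O → Y.card = S.card →
      Y ∩ O.biUnion id ⊆ S → F (insert S O) ≤ F (insert Y O))
    (n : ℕ) (C : Finset (Finset U)) (hCA : C ⊆ A) (hCk : C.card ≤ k) (hn : (C \ X).card = n) :
    ∃ D ⊆ X, D.card ≤ k ∧ F C ≤ F D := by
  induction n generalizing C with
  | zero =>
    exact ⟨C, Finset.sdiff_eq_empty_iff_subset.1 (Finset.card_eq_zero.1 hn), hCk, le_rfl⟩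
  | succ n ih =>
    obtain ⟨S, hS⟩ : (C \ X).Nonempty := Finset.card_pos.1 (by omega)
    obtain ⟨hSC, hSX⟩ := Finset.mem_sdiff.1 hS
    have hO : (C.erase S).card = C.card - 1 := Finset.card_erase_of_mem hSC
    have hB : ((C.erase S).biUnion id).card ≤ d * (k - 1) := by
      refine (Finset.card_biUnion_le_card_mul _ _ d
        fun Z hZ => hd Z (hCA (Finset.mem_of_mem_erase hZ))).trans ?_
      rw [mul_comm]
      exact Nat.mul_le_mul_left _ (by omega)
    obtain ⟨Y, hYX, hYc, hYB⟩ := hex S (hCA hSC) hSX _ hB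
    -- A set `Y` among the others would lie inside their union, forcing `Y = S`.
    have hYO : Y ∉ C.erase S := fun hY => by
      have hsub : Y ⊆ S := fun u hu =>
        hYB (Finset.mem_inter.2 ⟨hu, Finset.mem_biUnion.2 ⟨Y, hY, hu⟩⟩)
      exact hSX (Finset.eq_of_subset_of_card_le hsub hYc.ge ▸ hYX)
    have hpos : 0 < C.card := Finset.card_pos.2 ⟨S, hSC⟩
    obtain ⟨D, hDX, hDk, hDF⟩ := ih (insert Y (C.erase S))
      (Finset.insert_subset (hXA hYX) ((Finset.erase_subset _ _).trans hCA))
      (by rw [Finset.card_insert_of_notMem hYO]; omega)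
      (by
        rw [Finset.insert_sdiff_of_mem _ hYX, Finset.erase_sdiff_comm,
          Finset.card_erase_of_mem hS]
        omega)
    refine ⟨D, hDX, hDk, le_trans ?_ hDF⟩
    have := hF (C.erase S) S Y (Finset.notMem_erase _ _) hYO hYc hYB
    rwa [Finset.insert_erase hSC] at this

/-- If at least `(b+1)^(d-|T|)` sets of size `|S|` contain `T ⊆ S`, while no `T'` is contained in
more than `(b+1)^(d-|T'|)` of them, then one of them contains no element of `B \ S`. -/
theorem exists_inter_subset {d b : ℕ} {X : Finset (Finset U)} {S T B : Finset U}
    (hSd : S.card ≤ d) (hTS : T ⊆ S)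
    (hT : (b + 1) ^ (d - T.card) ≤ (X.filter (fun Y => Y.card = S.card ∧ T ⊆ Y)).card)
    (hinv : ∀ T' : Finset U,
      (X.filter (fun Y => Y.card = S.card ∧ T' ⊆ Y)).card ≤ (b + 1) ^ (d - T'.card))
    (hB : B.card ≤ b) : ∃ Y ∈ X, Y.card = S.card ∧ Y ∩ B ⊆ S := by
  rcases Nat.lt_or_ge T.card d with hlt | hge
  · by_contra! hcon
    have hsub : X.filter (fun Y => Y.card = S.card ∧ T ⊆ Y) ⊆
        (B \ T).biUnion (fun x => X.filter (fun Y => Y.card = S.card ∧ insert x T ⊆ Y)) := by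
      intro Y hY
      obtain ⟨hYX, hYc, hTY⟩ := Finset.mem_filter.1 hY
      obtain ⟨x, hx, hxS⟩ := Finset.not_subset.1 (hcon Y hYX hYc)
      obtain ⟨hxY, hxB⟩ := Finset.mem_inter.1 hx
      exact Finset.mem_biUnion.2 ⟨x, Finset.mem_sdiff.2 ⟨hxB, fun h => hxS (hTS h)⟩,
        Finset.mem_filter.2 ⟨hYX, hYc, Finset.insert_subset hxY hTY⟩⟩
    have h1 := hT.trans ((Finset.card_le_card hsub).trans
      (Finset.card_biUnion_le_card_mul _ _ ((b + 1) ^ (d - T.card - 1)) fun x hx => by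
        have := hinv (insert x T)
        rwa [Finset.card_insert_of_notMem (Finset.mem_sdiff.1 hx).2, Nat.sub_add_eq] at this))
    have h2 : (B \ T).card ≤ b := (Finset.card_le_card Finset.sdiff_subset).trans hB
    have h3 : (b + 1) ^ (d - T.card) = (b + 1) * (b + 1) ^ (d - T.card - 1) := by
      rw [← pow_succ']; congr 1; omega
    rw [h3] at h1
    have := Nat.le_of_mul_le_mul_right h1 (by positivity)
    omega
  -- Here `|T| = d`, so `T = S` and the only set counted by `hT` is `S` itself.
  · obtain ⟨Y, hY⟩ := Finset.card_pos.1 (lt_of_lt_of_le (by positivity) hT)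
    obtain ⟨hYX, hYc, hTY⟩ := Finset.mem_filter.1 hY
    have : T = Y := Finset.eq_of_subset_of_card_le hTY (by omega)
    exact ⟨Y, hYX, hYc, Finset.inter_subset_left.trans (this ▸ hTS)⟩

/-- One step of the process keeps the counts bounded, including those for `T'` not contained in
the set inserted, which the retention rule does not test. -/
theorem count_le_of_rule {d b : ℕ} {X : Finset (Finset U)} {S : Finset U}
    (hS : ¬ ∃ T ⊆ S, (b + 1) ^ (d - T.card) ≤
      (X.filter (fun Y => Y.card = S.card ∧ T ⊆ Y)).card)
    (hinv : ∀ (r : ℕ) (T : Finset U),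
      (X.filter (fun Y => Y.card = r ∧ T ⊆ Y)).card ≤ (b + 1) ^ (d - T.card))
    (r : ℕ) (T : Finset U) :
    ((insert S X).filter (fun Y => Y.card = r ∧ T ⊆ Y)).card ≤ (b + 1) ^ (d - T.card) := by
  rw [Finset.filter_insert]
  split_ifs with h
  · obtain ⟨rfl, hTS⟩ := h
    push Not at hS
    exact (Finset.card_insert_le _ _).trans (hS T hTS)
  · exact hinv r T

end Kernel


/-- The maximum `k`-coverage of `C`: the maximum, over sub-collections `C' ⊆ C` with
`|C'| ≤ k`, of the number of elements covered by at least one set of `C'`. -/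
def maxCoverage {U : Type*} [DecidableEq U] (k : ℕ) (C : Finset (Finset U)) : ℕ :=
  (C.powerset.filter (fun C' => C'.card ≤ k)).sup (fun C' => (C'.biUnion id).card)

/-- The maximum `k`-unique-coverage of `C`: the maximum, over sub-collections `C' ⊆ C` with
`|C'| ≤ k`, of the number of elements covered by exactly one set of `C'`. -/
def maxUniqueCoverage {U : Type*} [DecidableEq U] (k : ℕ) (C : Finset (Finset U)) : ℕ :=
  (C.powerset.filter (fun C' => C'.card ≤ k)).sup
    (fun C' => ((C'.biUnion id).filter (fun u => (C'.filter (fun S => u ∈ S)).card = 1)).card)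

/-- Fix integers `d ≥ 1` and `k ≥ 1` and set `b = d(k-1)`. Let `S₁, …, Sₘ` be a
sequence of distinct subsets of a finite universe `U`, each of cardinality at least 1 and at
most `d`. Define collections `X₀ = ∅` and, for `i = 1, …, m`: `Xᵢ = Xᵢ₋₁ ∪ {Sᵢ}` if there is
no `T ⊆ Sᵢ` such that at least `(b+1)^(d-|T|)` sets `Y ∈ Xᵢ₋₁` satisfy `|Y| = |Sᵢ|` and
`T ⊆ Y`; otherwise `Xᵢ = Xᵢ₋₁`. Then `f_k(Xₘ) = f_k({S₁, …, Sₘ})` and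
`g_k(Xₘ) = g_k({S₁, …, Sₘ})`. -/
theorem stmt_5 {U : Type*} [DecidableEq U] [Fintype U]
    (d k m b : ℕ) (hd : 1 ≤ d) (hk : 1 ≤ k) (hb : b = d * (k - 1))
    (S : Fin m → Finset U) (hinj : Function.Injective S)
    (hcard : ∀ i : Fin m, 1 ≤ (S i).card ∧ (S i).card ≤ d)
    (X : ℕ → Finset (Finset U))
    (hX0 : X 0 = ∅)
    (hXins : ∀ i : Fin m,
      (¬ ∃ T ⊆ S i, (b + 1) ^ (d - T.card) ≤
          ((X i).filter (fun Y => Y.card = (S i).card ∧ T ⊆ Y)).card) →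
        X (i + 1) = insert (S i) (X i))
    (hXskip : ∀ i : Fin m,
      (∃ T ⊆ S i, (b + 1) ^ (d - T.card) ≤
          ((X i).filter (fun Y => Y.card = (S i).card ∧ T ⊆ Y)).card) →
        X (i + 1) = X i) :
    maxCoverage k (X m) = maxCoverage k (Finset.image S Finset.univ) ∧
    maxUniqueCoverage k (X m) = maxUniqueCoverage k (Finset.image S Finset.univ) := by
  have hinv : ∀ i ≤ m, ∀ (r : ℕ) (T : Finset U),
      ((X i).filter (fun Y => Y.card = r ∧ T ⊆ Y)).card ≤ (b + 1) ^ (d - T.card) := by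
    intro i
    induction i with
    | zero => intro _ r T; simp [hX0]
    | succ i ih =>
      intro hi
      by_cases h : ∃ T ⊆ S ⟨i, hi⟩, (b + 1) ^ (d - T.card) ≤
          ((X i).filter (fun Y => Y.card = (S ⟨i, hi⟩).card ∧ T ⊆ Y)).card
      · rw [hXskip ⟨i, hi⟩ h]
        exact ih (by omega)
      · rw [hXins ⟨i, hi⟩ h]
        exact count_le_of_rule h (ih (by omega))
  have hstep : ∀ i : Fin m, X i ⊆ X (i + 1) ∧ X (i + 1) ⊆ insert (S i) (X i) := by
    intro i
    by_cases h : ∃ T ⊆ S i, (b + 1) ^ (d - T.card) ≤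
        ((X i).filter (fun Y => Y.card = (S i).card ∧ T ⊆ Y)).card
    · rw [hXskip i h]
      exact ⟨subset_rfl, Finset.subset_insert _ _⟩
    · rw [hXins i h]
      exact ⟨Finset.subset_insert _ _, subset_rfl⟩
  have hmono : ∀ i j, i ≤ j → j ≤ m → X i ⊆ X j := by
    intro i j hij
    induction j, hij using Nat.le_induction with
    | base => exact fun _ => subset_rfl
    | succ j _ ih => exact fun hj => (ih (by omega)).trans (hstep ⟨j, hj⟩).1
  have hXA : ∀ i ≤ m, X i ⊆ Finset.image S Finset.univ := by
    intro i
    induction i with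
    | zero => simp [hX0]
    | succ i ih =>
      exact fun hi => (hstep ⟨i, hi⟩).2.trans (Finset.insert_subset
        (Finset.mem_image_of_mem _ (Finset.mem_univ _)) (ih (by omega)))
  have hex : ∀ Z ∈ Finset.image S Finset.univ, Z ∉ X m → ∀ B : Finset U,
      B.card ≤ d * (k - 1) → ∃ Y ∈ X m, Y.card = Z.card ∧ Y ∩ B ⊆ Z := by
    intro Z hZ hZX B hB
    obtain ⟨i, -, rfl⟩ := Finset.mem_image.1 hZ
    by_cases h : ∃ T ⊆ S i, (b + 1) ^ (d - T.card) ≤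
        ((X i).filter (fun Y => Y.card = (S i).card ∧ T ⊆ Y)).card
    · obtain ⟨T, hTS, hT⟩ := h
      obtain ⟨Y, hY, hY'⟩ := exists_inter_subset (hcard i).2 hTS hT
        (hinv i i.isLt.le _) (hB.trans hb.ge)
      exact ⟨Y, hmono i m i.isLt.le le_rfl hY, hY'⟩
    · refine absurd (hmono (i + 1) m i.isLt le_rfl ?_) hZX
      rw [hXins i h]
      exact Finset.mem_insert_self _ _
  have hle : ∀ Z ∈ Finset.image S Finset.univ, Z.card ≤ d := by
    intro Z hZ
    obtain ⟨i, -, rfl⟩ := Finset.mem_image.1 hZ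
    exact (hcard i).2
  have main : ∀ F : Finset (Finset U) → ℕ,
      (∀ (O : Finset (Finset U)) (S Y : Finset U), S ∉ O → Y ∉ O → Y.card = S.card →
        Y ∩ O.biUnion id ⊆ S → F (insert S O) ≤ F (insert Y O)) →
      ((X m).powerset.filter (fun C' => C'.card ≤ k)).sup F =
      ((Finset.image S Finset.univ).powerset.filter (fun C' => C'.card ≤ k)).sup F := by
    intro F hF
    apply le_antisymm
    · exact Finset.sup_mono (Finset.filter_subset_filter _
        (Finset.powerset_mono.2 (hXA m le_rfl)))
    · refine Finset.sup_le fun C hC => ?_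
      obtain ⟨hCA, hCk⟩ := Finset.mem_filter.1 hC
      obtain ⟨D, hDX, hDk, hDF⟩ := exists_solution_in_kernel hle (hXA m le_rfl) hex F hF _ C
        (Finset.mem_powerset.1 hCA) hCk rfl
      exact hDF.trans (Finset.le_sup
        (Finset.mem_filter.2 ⟨Finset.mem_powerset.2 hDX, hDk⟩))
  exact ⟨main _ fun _ _ _ _ _ => card_biUnion_exchange,
    main (fun C => (uniquelyCovered C).card) fun _ _ _ => card_uniquelyCovered_exchange⟩
end

section
/- Let C be a finite collection of m distinct subsets of a finite universe U such that every element of U belongs to at most r sets of C, where r ≥ 1. Let k ≥ 1 be an integer and let ε be a real with 0 < ε ≤ 1, and suppose m > ⌈rk/ε⌉. Let K ⊆ C with |K| = ⌈rk/ε⌉ consist of sets of largest cardinality, i.e., |S| ≤ |S'| for every S ∈ C \ K and every S' ∈ K. Then f_k(K) ≥ (1 - ε) · f_k(C); in particular there exist k sets in K that cover at least (1-ε) times the optimal k-coverage of C. -/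
theorem card_biUnion_le_maxCoverage {U : Type*} [DecidableEq U] {k : ℕ}
    {C X : Finset (Finset U)} (hX : X ⊆ C) (hXk : X.card ≤ k) :
    (X.biUnion id).card ≤ maxCoverage k C :=
  Finset.le_sup (f := fun C' : Finset (Finset U) => (C'.biUnion id).card)
    (Finset.mem_filter.2 ⟨Finset.mem_powerset.2 hX, hXk⟩)

theorem exists_card_biUnion_eq_maxCoverage {U : Type*} [DecidableEq U] (k : ℕ)
    (C : Finset (Finset U)) :
    ∃ X ⊆ C, X.card ≤ k ∧ (X.biUnion id).card = maxCoverage k C := by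
  have hne : (C.powerset.filter (fun C' => C'.card ≤ k)).Nonempty := ⟨∅, by simp⟩
  obtain ⟨X, hX, h⟩ := Finset.exists_mem_eq_sup _ hne
    (fun C' : Finset (Finset U) => (C'.biUnion id).card)
  simp only [Finset.mem_filter, Finset.mem_powerset] at hX
  exact ⟨X, hX.1, hX.2, h.symm⟩

/-- The average of `|A ∩ S|` over `S ∈ K` is at most `r |A| / |K|`, by double counting. -/
theorem exists_small_inter {U : Type*} [DecidableEq U] {K : Finset (Finset U)} {r : ℕ}
    (hmult : ∀ u : U, (K.filter (fun S => u ∈ S)).card ≤ r) (hK : K.Nonempty)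
    {δ : ℝ} (hδ : (r : ℝ) ≤ K.card * δ) (A : Finset U) :
    ∃ S ∈ K, ((A ∩ S).card : ℝ) ≤ δ * A.card := by
  apply Finset.exists_le_of_sum_le hK
  have h : ((∑ S ∈ K, (A ∩ S).card : ℕ) : ℝ) ≤ ((A.card * r : ℕ) : ℝ) :=
    Nat.cast_le.2 (Finset.sum_card_inter_le fun u _ => hmult u)
  push_cast at h
  rw [Finset.sum_const, nsmul_eq_mul]
  nlinarith [mul_le_mul_of_nonneg_left hδ (Nat.cast_nonneg (α := ℝ) A.card)]

/-- Exchanging `S` for a set `S'` at least as large costs at most the overlap of `S'` with the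
region covered before. If `S'` already belongs to `X` the bound is still valid. -/
theorem card_biUnion_exchange_s9 {U : Type*} [DecidableEq U] {X : Finset (Finset U)}
    {S S' : Finset U} (hS : S ∈ X) (hSS' : S.card ≤ S'.card) :
    (X.biUnion id).card ≤
      ((insert S' (X.erase S)).biUnion id).card + (X.biUnion id ∩ S').card := by
  have hX : X.biUnion id = S ∪ (X.erase S).biUnion id := by
    conv_lhs => rw [← Finset.insert_erase hS]
    simp
  have hY : (insert S' (X.erase S)).biUnion id = S' ∪ (X.erase S).biUnion id := by simp
  have h1 : (X.biUnion id).card ≤ S.card + ((X.erase S).biUnion id).card := by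
    rw [hX]
    exact Finset.card_union_le _ _
  have h2 := Finset.card_union_add_card_inter S' ((X.erase S).biUnion id)
  have h3 : (S' ∩ (X.erase S).biUnion id).card ≤ (X.biUnion id ∩ S').card := by
    rw [Finset.inter_comm]
    refine Finset.card_le_card (Finset.inter_subset_inter_right ?_)
    rw [hX]
    exact Finset.subset_union_right
  rw [hY]
  omega

/-- Iterated exchange: each of the `n` sets of `X` outside `K` costs at most a factor `1 - δ`. -/
theorem pow_mul_card_biUnion_le {U : Type*} [DecidableEq U] {C K : Finset (Finset U)}
    {r k : ℕ} (hmult : ∀ u : U, (K.filter (fun S => u ∈ S)).card ≤ r) (hK : K.Nonempty)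
    (hlargest : ∀ S ∈ C \ K, ∀ S' ∈ K, S.card ≤ S'.card) (hKC : K ⊆ C)
    {δ : ℝ} (hδ1 : δ ≤ 1) (hδ : (r : ℝ) ≤ K.card * δ) (n : ℕ) :
    ∀ X ⊆ C, X.card ≤ k → (X \ K).card = n →
      (1 - δ) ^ n * ((X.biUnion id).card : ℝ) ≤ maxCoverage k K := by
  induction n with
  | zero =>
    intro X _ hXk hn
    have hXK : X ⊆ K := Finset.sdiff_eq_empty_iff_subset.1 (Finset.card_eq_zero.1 hn)
    simpa using card_biUnion_le_maxCoverage hXK hXk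
  | succ n ih =>
    intro X hXC hXk hn
    obtain ⟨S, hS⟩ : (X \ K).Nonempty := Finset.card_pos.1 (by omega)
    obtain ⟨hSX, hSK⟩ := Finset.mem_sdiff.1 hS
    obtain ⟨S', hS'K, hS'⟩ := exists_small_inter hmult hK hδ (X.biUnion id)
    have hcard := hlargest S (Finset.mem_sdiff.2 ⟨hXC hSX, hSK⟩) S' hS'K
    have hY := ih (insert S' (X.erase S))
      (Finset.insert_subset (hKC hS'K) ((Finset.erase_subset _ _).trans hXC))
      (by
        have h1 := Finset.card_insert_le S' (X.erase S)
        have h2 := Finset.card_erase_add_one hSX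
        omega)
      (by
        rw [Finset.insert_sdiff_of_mem _ hS'K, Finset.erase_sdiff_comm,
          Finset.card_erase_of_mem hS, hn]
        rfl)
    have hex : ((X.biUnion id).card : ℝ) ≤
        ((insert S' (X.erase S)).biUnion id).card + (X.biUnion id ∩ S').card := by
      exact_mod_cast card_biUnion_exchange_s9 hSX hcard
    refine le_trans ?_ hY
    rw [pow_succ, mul_assoc]
    exact mul_le_mul_of_nonneg_left (by linarith) (pow_nonneg (by linarith) n)

/-- Let `C` be a finite collection of `m` distinct subsets of a finite universe
`U` such that every element of `U` belongs to at most `r` sets of `C`, where `r ≥ 1`. Let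
`k ≥ 1` be an integer and `ε` a real with `0 < ε ≤ 1`, with `m > ⌈rk/ε⌉`. Let `K ⊆ C` with
`|K| = ⌈rk/ε⌉` consist of sets of largest cardinality. Then `f_k(K) ≥ (1 - ε) · f_k(C)`. -/
theorem stmt_9 {U : Type*} [DecidableEq U] [Fintype U]
    (C : Finset (Finset U)) (r k : ℕ) (hr : 1 ≤ r) (hk : 1 ≤ k)
    (hmult : ∀ u : U, (C.filter (fun S => u ∈ S)).card ≤ r)
    (ε : ℝ) (hε0 : 0 < ε) (hε1 : ε ≤ 1)
    (hm : C.card > ⌈(r * k : ℝ) / ε⌉₊)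
    (K : Finset (Finset U)) (hKC : K ⊆ C) (hKcard : K.card = ⌈(r * k : ℝ) / ε⌉₊)
    (hlargest : ∀ S ∈ C \ K, ∀ S' ∈ K, S.card ≤ S'.card) :
    (maxCoverage k K : ℝ) ≥ (1 - ε) * (maxCoverage k C : ℝ) := by
  have hk0 : (1 : ℝ) ≤ k := by exact_mod_cast hk
  have hr0 : (1 : ℝ) ≤ r := by exact_mod_cast hr
  have hceil : (r * k : ℝ) / ε ≤ K.card := by
    rw [hKcard]
    exact Nat.le_ceil _
  have hK : K.Nonempty := by
    rw [← Finset.card_pos, hKcard, Nat.ceil_pos]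
    positivity
  have hδ0 : 0 ≤ ε / k := by positivity
  have hδ1 : ε / k ≤ 1 := (div_le_one (by linarith)).2 (by linarith)
  have hδ : (r : ℝ) ≤ K.card * (ε / k) := by
    rw [div_le_iff₀ hε0] at hceil
    rw [← mul_div_assoc, le_div_iff₀ (by linarith)]
    exact hceil
  have hmultK : ∀ u : U, (K.filter (fun S => u ∈ S)).card ≤ r := fun u =>
    (Finset.card_le_card (Finset.filter_subset_filter _ hKC)).trans (hmult u)
  obtain ⟨X, hXC, hXk, hX⟩ := exists_card_biUnion_eq_maxCoverage k C
  have hmain := pow_mul_card_biUnion_le hmultK hK hlargest hKC hδ1 hδ _ X hXC hXk rfl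
  rw [hX] at hmain
  have hpow : (1 - ε / k) ^ k ≤ (1 - ε / k) ^ (X \ K).card :=
    pow_le_pow_of_le_one (by linarith) (by linarith)
      ((Finset.card_le_card Finset.sdiff_subset).trans hXk)
  have hbern : 1 - ε ≤ (1 - ε / k) ^ k := by
    have h := one_add_mul_le_pow (a := -(ε / k)) (by linarith) k
    have h' : (k : ℝ) * (ε / k) = ε := mul_div_cancel₀ _ (by linarith)
    rw [← sub_eq_add_neg] at h
    linarith
  exact (mul_le_mul_of_nonneg_right (hbern.trans hpow) (Nat.cast_nonneg _)).trans hmain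
end

section
/- Let C be a finite collection of m distinct subsets of a finite universe U such that every element of U belongs to at most r sets of C, where r ≥ 1. Let k ≥ 1 be an integer and let ε be a real with 0 < ε ≤ 1, and suppose m > ⌈rk/ε⌉. Let K ⊆ C with |K| = ⌈rk/ε⌉ consist of sets of largest cardinality, i.e., |S| ≤ |S'| for every S ∈ C \ K and every S' ∈ K. Then g_k(K) ≥ (1/2 - ε) · g_k(C); in particular there exist k sets in K that uniquely cover at least (1/2 - ε) times the optimal k-unique-coverage of C. -/
/-- The set of elements uniquely covered by `C`, in the form in which it occurs inside
`maxUniqueCoverage`. -/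
def uniq {U : Type*} [DecidableEq U] (C : Finset (Finset U)) : Finset U :=
  (C.biUnion id).filter (fun u => (C.filter (fun S => u ∈ S)).card = 1)

/-- Membership in the union is implied by having multiplicity one. -/
lemma mem_uniq {U : Type*} [DecidableEq U] (C : Finset (Finset U)) (u : U) :
    u ∈ uniq C ↔ (C.filter (fun S => u ∈ S)).card = 1 := by
  unfold uniq
  simp only [Finset.mem_filter, Finset.mem_biUnion, id, and_iff_right_iff_imp]
  intro h
  obtain ⟨S, hS⟩ := Finset.card_pos.mp (by omega : 0 < (C.filter (fun S => u ∈ S)).card)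
  exact ⟨S, (Finset.mem_filter.mp hS).1, (Finset.mem_filter.mp hS).2⟩

lemma uniq_le {U : Type*} [DecidableEq U] (k : ℕ) (C C' : Finset (Finset U)) (h : C' ⊆ C)
    (hc : C'.card ≤ k) : (uniq C').card ≤ maxUniqueCoverage k C :=
  Finset.le_sup (f := fun C' : Finset (Finset U) => (uniq C').card) (by simp [h, hc])

lemma exists_opt {U : Type*} [DecidableEq U] (k : ℕ) (C : Finset (Finset U)) :
    ∃ O ⊆ C, O.card ≤ k ∧ maxUniqueCoverage k C = (uniq O).card := by
  obtain ⟨O, hO, h⟩ := Finset.exists_mem_eq_sup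
    (C.powerset.filter (fun C' => C'.card ≤ k)) ⟨∅, by simp⟩
    (fun C' : Finset (Finset U) => (uniq C').card)
  simp only [Finset.mem_filter, Finset.mem_powerset] at hO
  exact ⟨O, hO.1, hO.2, h⟩

lemma uniq_insert {U : Type*} [DecidableEq U] (R : Finset (Finset U)) (S : Finset U) :
    (uniq R).card + S.card ≤ (uniq (insert S R)).card + 2 * (S ∩ R.biUnion id).card := by
  have hsub : (uniq R \ S) ∪ (S \ R.biUnion id) ⊆ uniq (insert S R) := by
    intro u hu
    rw [mem_uniq, Finset.filter_insert]
    rcases Finset.mem_union.mp hu with hu | hu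
    · rw [Finset.mem_sdiff, mem_uniq] at hu
      rw [if_neg hu.2, hu.1]
    · simp only [Finset.mem_sdiff, Finset.mem_biUnion, id, not_exists, not_and] at hu
      have : R.filter (fun S => u ∈ S) = ∅ := Finset.filter_eq_empty_iff.mpr hu.2
      rw [if_pos hu.1, this]
      simp
  have hd : Disjoint (uniq R \ S) (S \ R.biUnion id) :=
    Finset.disjoint_left.mpr fun u h1 h2 =>
      (Finset.mem_sdiff.mp h1).2 (Finset.mem_sdiff.mp h2).1
  have h1 := Finset.card_le_card hsub
  rw [Finset.card_union_of_disjoint hd] at h1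
  have h2 := Finset.card_sdiff_add_card_inter (uniq R) S
  have h3 := Finset.card_sdiff_add_card_inter S (R.biUnion id)
  have h4 : (uniq R ∩ S).card ≤ (S ∩ R.biUnion id).card := by
    rw [Finset.inter_comm]
    exact Finset.card_le_card
      (Finset.inter_subset_inter_left (Finset.filter_subset _ _))
  omega

lemma uniq_split {U : Type*} [DecidableEq U] (O K : Finset (Finset U)) :
    (uniq O).card ≤ (uniq (O ∩ K)).card + ∑ S ∈ O \ K, S.card := by
  have hsub : uniq O ⊆ uniq (O ∩ K) ∪ (O \ K).biUnion id := by
    intro u hu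
    rw [Finset.mem_union]
    by_cases h : u ∈ (O \ K).biUnion id
    · exact Or.inr h
    · left
      rw [mem_uniq] at hu ⊢
      rw [← hu]
      congr 1
      ext S
      simp only [Finset.mem_biUnion, Finset.mem_sdiff, id, not_exists, not_and] at h
      simp only [Finset.mem_filter, Finset.mem_inter]
      have := h S
      tauto
  calc _ ≤ _ := Finset.card_le_card hsub
    _ ≤ _ := Finset.card_union_le _ _
    _ ≤ _ := Nat.add_le_add_left Finset.card_biUnion_le _

/-- Averaging: the sets outside `R` meet the region covered by `R` only a little on average,
because each covered element has already used one of its at most `r` incidences. -/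
lemma exists_small_overlap {U : Type*} [DecidableEq U] (K R : Finset (Finset U)) (r k : ℕ)
    (ε : ℝ) (hk : 1 ≤ k) (hr : 1 ≤ r) (hε0 : 0 < ε) (hε1 : ε ≤ 1)
    (hmult : ∀ u : U, (K.filter (fun S => u ∈ S)).card ≤ r)
    (hK : (r * k : ℝ) / ε ≤ K.card) (hRK : R ⊆ K) (hRk : R.card < k) :
    ∃ S ∈ K \ R, ((S ∩ R.biUnion id).card : ℝ) ≤ ε / k * (R.biUnion id).card := by
  have hk0 : (0 : ℝ) < k := by exact_mod_cast hk
  have hr1 : (1 : ℝ) ≤ r := by exact_mod_cast hr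
  have hRk' : (R.card : ℝ) < k := by exact_mod_cast hRk
  rw [div_le_iff₀ hε0] at hK
  have hcard : ((K \ R).card : ℝ) = K.card - R.card := by
    rw [Finset.card_sdiff_of_subset hRK, Nat.cast_sub (Finset.card_le_card hRK)]
  have hbig : ((r : ℝ) - 1) ≤ (K \ R).card * (ε / k) := by
    rw [hcard, mul_div_assoc', le_div_iff₀ hk0]
    nlinarith
  have hne : (K \ R).Nonempty := by
    rw [← Finset.card_pos]
    have : (0 : ℝ) < (K \ R).card := by
      rw [hcard]
      have : (k : ℝ) ≤ K.card := by
        have : (0 : ℝ) ≤ K.card := by positivity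
        nlinarith
      linarith
    exact_mod_cast this
  refine Finset.exists_le_of_sum_le hne ?_
  rw [Finset.sum_const, nsmul_eq_mul, ← mul_assoc]
  refine le_trans ?_ (mul_le_mul_of_nonneg_right hbig (by positivity))
  have hswap : ∑ S ∈ K \ R, (S ∩ R.biUnion id).card
      = ∑ u ∈ R.biUnion id, ((K \ R).filter (fun S => u ∈ S)).card := by
    simp_rw [Finset.inter_comm _ (R.biUnion id), ← Finset.filter_mem_eq_inter]
    exact (Finset.sum_card_bipartiteAbove_eq_sum_card_bipartiteBelow (fun S u => u ∈ S))
  have hle : ∑ u ∈ R.biUnion id, (((K \ R).filter (fun S => u ∈ S)).card : ℝ)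
      ≤ ∑ u ∈ R.biUnion id, ((r : ℝ) - 1) := by
    refine Finset.sum_le_sum fun u hu => ?_
    obtain ⟨T, hT, huT⟩ := Finset.mem_biUnion.mp hu
    have hlt : ((K \ R).filter (fun S => u ∈ S)).card < (K.filter (fun S => u ∈ S)).card := by
      refine Finset.card_lt_card (Finset.ssubset_iff_of_subset
        (Finset.filter_subset_filter _ Finset.sdiff_subset) |>.mpr ⟨T, ?_, ?_⟩)
      · exact Finset.mem_filter.mpr ⟨hRK hT, huT⟩
      · simp [hT]
    have : ((K \ R).filter (fun S => u ∈ S)).card + 1 ≤ r := hlt.trans_le (hmult u)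
    have : (((K \ R).filter (fun S => u ∈ S)).card : ℝ) + 1 ≤ r := by exact_mod_cast this
    linarith
  rw [Finset.sum_const, nsmul_eq_mul, mul_comm] at hle
  calc _ = ((∑ S ∈ K \ R, (S ∩ R.biUnion id).card : ℕ) : ℝ) := by push_cast; rfl
    _ ≤ _ := by rw [hswap]; push_cast; exact hle

/-- The greedy choice of `l` sets of `K`, with the accumulated relative loss `2ε l/k`. -/
lemma exists_greedy {U : Type*} [DecidableEq U] (K : Finset (Finset U)) (r k : ℕ)
    (ε : ℝ) (hk : 1 ≤ k) (hr : 1 ≤ r) (hε0 : 0 < ε) (hε1 : ε ≤ 1)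
    (hmult : ∀ u : U, (K.filter (fun S => u ∈ S)).card ≤ r)
    (hK : (r * k : ℝ) / ε ≤ K.card) (l : ℕ) (hl : l ≤ k) :
    ∃ R ⊆ K, R.card = l ∧
      (1 - 2 * (ε / k) * l) * ((∑ S ∈ R, S.card : ℕ) : ℝ) ≤ (uniq R).card := by
  induction l with
  | zero => exact ⟨∅, by simp, by simp, by simp⟩
  | succ l ih =>
    obtain ⟨R, hRK, hRl, hR⟩ := ih (by omega)
    obtain ⟨S, hS, hov⟩ := exists_small_overlap K R r k ε hk hr hε0 hε1 hmult hK hRK (by omega)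
    rw [Finset.mem_sdiff] at hS
    refine ⟨insert S R, Finset.insert_subset hS.1 hRK, by
      rw [Finset.card_insert_of_notMem hS.2, hRl], ?_⟩
    rw [Finset.sum_insert hS.2]
    have hV : ((R.biUnion id).card : ℝ) ≤ ((∑ S ∈ R, S.card : ℕ) : ℝ) := by
      exact_mod_cast (Finset.card_biUnion_le (s := R) (t := id))
    have hins : ((uniq R).card : ℝ) + S.card
        ≤ (uniq (insert S R)).card + 2 * (S ∩ R.biUnion id).card := by
      exact_mod_cast uniq_insert R S
    have hδ : 0 ≤ ε / k := by positivity
    have h1 := mul_le_mul_of_nonneg_left hV hδ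
    have h2 : 0 ≤ ε / k * ((l : ℝ) + 1) * S.card := by positivity
    push_cast at *
    nlinarith

/-- Let `C` be a finite collection of `m` distinct subsets of a finite universe
`U` such that every element of `U` belongs to at most `r` sets of `C`, where `r ≥ 1`. Let
`k ≥ 1` be an integer and `ε` a real with `0 < ε ≤ 1`, with `m > ⌈rk/ε⌉`. Let `K ⊆ C` with
`|K| = ⌈rk/ε⌉` consist of sets of largest cardinality. Then
`g_k(K) ≥ (1/2 - ε) · g_k(C)`. -/
theorem stmt_10 {U : Type*} [DecidableEq U] [Fintype U]
    (C : Finset (Finset U)) (r k : ℕ) (hr : 1 ≤ r) (hk : 1 ≤ k)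
    (hmult : ∀ u : U, (C.filter (fun S => u ∈ S)).card ≤ r)
    (ε : ℝ) (hε0 : 0 < ε) (hε1 : ε ≤ 1)
    (hm : C.card > ⌈(r * k : ℝ) / ε⌉₊)
    (K : Finset (Finset U)) (hKC : K ⊆ C) (hKcard : K.card = ⌈(r * k : ℝ) / ε⌉₊)
    (hlargest : ∀ S ∈ C \ K, ∀ S' ∈ K, S.card ≤ S'.card) :
    (maxUniqueCoverage k K : ℝ) ≥ (1 / 2 - ε) * (maxUniqueCoverage k C : ℝ) := by
  rcases lt_or_ge (1 / 2) ε with hε | hε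
  · have h1 : (0 : ℝ) ≤ maxUniqueCoverage k K := by positivity
    have h2 : (0 : ℝ) ≤ maxUniqueCoverage k C := by positivity
    nlinarith
  obtain ⟨O, hOC, hOk, hO⟩ := exists_opt k C
  have hK : (r * k : ℝ) / ε ≤ K.card := by rw [hKcard]; exact Nat.le_ceil _
  have hlk : (O \ K).card ≤ k := (Finset.card_le_card Finset.sdiff_subset).trans hOk
  obtain ⟨R, hRK, hRl, hR⟩ := exists_greedy K r k ε hk hr hε0 hε1
    (fun u => (Finset.card_le_card (Finset.filter_subset_filter _ hKC)).trans (hmult u))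
    hK _ hlk
  have hsum : ∑ S ∈ O \ K, S.card ≤ ∑ S ∈ R, S.card := by
    rcases (O \ K).eq_empty_or_nonempty with h | h
    · simp [h]
    -- The largest set of `O \ K` separates the sizes occurring in the two sums.
    obtain ⟨S₀, hS₀, hmax⟩ := Finset.exists_max_image (O \ K) Finset.card h
    have hS₀C := Finset.sdiff_subset_sdiff hOC (Finset.Subset.refl K) hS₀
    calc _ ≤ (O \ K).card • S₀.card := Finset.sum_le_card_nsmul _ _ _ hmax
      _ = R.card • S₀.card := by rw [hRl]
      _ ≤ _ := Finset.card_nsmul_le_sum _ _ _ fun S hS => hlargest _ hS₀C _ (hRK hS)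
  have hin := uniq_le k K (O ∩ K) Finset.inter_subset_right
    ((Finset.card_le_card Finset.inter_subset_left).trans hOk)
  have hRg := uniq_le k K R hRK (by omega)
  have hsplit := uniq_split O K
  have hbound : (maxUniqueCoverage k C : ℝ)
      ≤ maxUniqueCoverage k K + ((∑ S ∈ R, S.card : ℕ) : ℝ) := by
    rw [hO]; exact_mod_cast (by omega)
  have hRg' : ((uniq R).card : ℝ) ≤ maxUniqueCoverage k K := by exact_mod_cast hRg
  have hk0 : (0 : ℝ) < k := by exact_mod_cast hk
  have hfrac : ε / k * ((O \ K).card : ℝ) ≤ ε := by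
    rw [div_mul_eq_mul_div, div_le_iff₀ hk0]
    exact mul_le_mul_of_nonneg_left (by exact_mod_cast hlk) hε0.le
  have hσ : (0 : ℝ) ≤ ((∑ S ∈ R, S.card : ℕ) : ℝ) := Nat.cast_nonneg _
  have hg : (0 : ℝ) ≤ maxUniqueCoverage k K := Nat.cast_nonneg _
  have h1 := mul_le_mul_of_nonneg_right hfrac hσ
  have h2 := mul_le_mul_of_nonneg_left hbound (by linarith : 0 ≤ 1 - 2 * ε)
  have h3 := mul_nonneg hε0.le hg
  nlinarith
end

section
/- Let K be a finite nonempty collection of distinct subsets of a finite universe U such that every element of U belongs to at most r sets of K, where r ≥ 1. Let s be an integer with 0 ≤ s ≤ |K|, let Z be a uniformly random subset of K with |Z| = s (all s-element sub-collections of K equally likely), and let p = s/|K|. Then E[|ψ(Z)|] ≥ p(1 - pr) · Σ_{S ∈ K} |S|. -/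
/-!
By linearity of expectation it suffices to bound, for each `u`, the probability that the random
`s`-element collection `Z` meets the family `A` of the sets of `K` that contain `u`. By the second
Bonferroni inequality this probability is at least the expected size of `Z ∩ A` minus the expected
number of pairs in `Z ∩ A`. A member of `A` lies in `Z` with probability `p`, and two distinct
members lie in `Z` together with probability at most `p ^ 2`, since sampling without replacement is
negatively correlated. Counting ordered pairs (a factor `2` is lost, harmlessly), the hitting
probability is at least `p * |A| - p ^ 2 * |A| ^ 2 ≥ p * (1 - p * r) * |A|`
(`hitting_count_ge`). Summing over `u` and using `∑ u, |A u| = ∑ S ∈ K, |S|` gives the claim.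
-/

open Finset in
/-- Each member of `K` lies in a uniformly random `s`-subset with probability `s / |K|`. -/
lemma card_mul_card_powersetCard_mem {α : Type*} [DecidableEq α] (K : Finset α) (s : ℕ)
    {x : α} (hx : x ∈ K) :
    #K * #{Z ∈ K.powersetCard s | x ∈ Z} = s * #(K.powersetCard s) := by
  rcases s with _ | b
  · simp
  · have h := card_filter_powersetCard_subset {x} K (b + 1) (by simpa using hx) (by simp)
    simp only [singleton_subset_iff, card_singleton, Nat.add_sub_cancel] at h
    obtain ⟨a, ha⟩ : ∃ a, #K = a + 1 :=
      ⟨#K - 1, by have := card_pos.2 ⟨x, hx⟩; omega⟩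
    rw [h, card_powersetCard, ha, Nat.add_sub_cancel, Nat.add_one_mul_choose_eq, mul_comm]

open Finset in
/-- Two distinct members of `K` lie together in a uniformly random `s`-subset with probability
at most `(s / |K|) ^ 2`. -/
lemma card_sq_mul_card_powersetCard_pair_le {α : Type*} [DecidableEq α] (K : Finset α) (s : ℕ)
    {x y : α} (hx : x ∈ K) (hy : y ∈ K) (hxy : x ≠ y) :
    #K ^ 2 * #{Z ∈ K.powersetCard s | x ∈ Z ∧ y ∈ Z} ≤ s ^ 2 * #(K.powersetCard s) := by
  have hsub : {x, y} ⊆ K := by simp [insert_subset_iff, hx, hy]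
  have h2 : #({x, y} : Finset α) = 2 := card_pair hxy
  rcases Nat.lt_or_ge s 2 with hs | hs
  · have : #{Z ∈ K.powersetCard s | x ∈ Z ∧ y ∈ Z} = 0 := by
      rw [card_eq_zero, filter_eq_empty_iff]
      rintro Z hZ ⟨h, h'⟩
      have : #({x, y} : Finset α) ≤ #Z := card_le_card (by simp [insert_subset_iff, h, h'])
      have := (mem_powersetCard.1 hZ).2
      omega
    simp [this]
  · have h := card_filter_powersetCard_subset {x, y} K s hsub (by omega)
    simp only [insert_subset_iff, singleton_subset_iff, h2] at h
    have hK := card_le_card hsub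
    obtain ⟨a, ha⟩ : ∃ a, #K = a + 2 := ⟨#K - 2, by omega⟩
    obtain ⟨b, rfl⟩ : ∃ b, s = b + 2 := ⟨s - 2, by omega⟩
    rw [h, card_powersetCard, ha, Nat.add_sub_cancel, Nat.add_sub_cancel]
    have e1 := Nat.add_one_mul_choose_eq a b
    have e2 := Nat.add_one_mul_choose_eq (a + 1) (b + 1)
    have e3 : a.choose b ≤ (a + 1).choose (b + 1) := by
      rw [Nat.choose_succ_succ']; omega
    have e4 : (a + 2) * a.choose b ≤ (b + 2) * (a + 1).choose (b + 1) := by nlinarith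
    calc (a + 2) ^ 2 * a.choose b = (a + 2) * ((a + 2) * a.choose b) := by ring
      _ ≤ (a + 2) * ((b + 2) * (a + 1).choose (b + 1)) := Nat.mul_le_mul_left _ e4
      _ = (b + 2) * ((a + 1 + 1) * (a + 1).choose (b + 1)) := by ring
      _ = (b + 2) ^ 2 * (a + 2).choose (b + 2) := by rw [e2]; ring

open Finset in
/-- Bonferroni lower bound for the number of `s`-subsets of `K` that meet `A`. -/
lemma hitting_count_ge {α : Type*} [DecidableEq α] (K A : Finset α) (hA : A ⊆ K)
    (hK : K.Nonempty) (s : ℕ) (p : ℝ) (hp : p = (s : ℝ) / (#K : ℝ)) :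
    (p * #A - p ^ 2 * (#A : ℝ) ^ 2) * #(K.powersetCard s)
      ≤ (#{Z ∈ K.powersetCard s | (Z ∩ A).Nonempty} : ℝ) := by
  have hk : (0 : ℝ) < #K := by exact_mod_cast card_pos.2 hK
  -- the Bonferroni inequality, for a single `Z` and with ordered pairs
  have hpt : ∀ Z : Finset α, #(Z ∩ A) ≤ (if (Z ∩ A).Nonempty then 1 else 0) + #(Z ∩ A).offDiag := by
    intro Z
    rw [offDiag_card]
    split_ifs with h
    · obtain ⟨m, hm⟩ : ∃ m, #(Z ∩ A) = m + 1 :=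
        ⟨#(Z ∩ A) - 1, by have := card_pos.2 h; omega⟩
      rw [hm]
      have : (m + 1) * (m + 1) = m * m + m + (m + 1) := by ring
      have := Nat.zero_le (m * m)
      omega
    · simp [not_nonempty_iff_eq_empty.1 h]
  have hsum := sum_le_sum (fun Z (_ : Z ∈ K.powersetCard s) => hpt Z)
  rw [sum_add_distrib, ← card_filter] at hsum
  have h1 : ∑ Z ∈ K.powersetCard s, #(Z ∩ A)
      = ∑ x ∈ A, #{Z ∈ K.powersetCard s | x ∈ Z} := by
    simp_rw [inter_comm _ A, ← filter_mem_eq_inter, card_filter]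
    exact sum_comm
  have h2 : ∑ Z ∈ K.powersetCard s, #(Z ∩ A).offDiag
      = ∑ q ∈ A.offDiag, #{Z ∈ K.powersetCard s | q.1 ∈ Z ∧ q.2 ∈ Z} := by
    have (Z : Finset α) : (Z ∩ A).offDiag = {q ∈ A.offDiag | q.1 ∈ Z ∧ q.2 ∈ Z} := by
      ext q; simp only [mem_offDiag, mem_inter, mem_filter]; tauto
    simp_rw [this, card_filter]
    exact sum_comm
  have h3 : ∀ x ∈ A, (#{Z ∈ K.powersetCard s | x ∈ Z} : ℝ) = p * #(K.powersetCard s) := by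
    intro x hx
    have : (#K : ℝ) * #{Z ∈ K.powersetCard s | x ∈ Z} = s * #(K.powersetCard s) := by
      exact_mod_cast card_mul_card_powersetCard_mem K s (hA hx)
    rw [hp, div_mul_eq_mul_div, eq_div_iff hk.ne', ← this, mul_comm]
  have h4 : ∀ q ∈ A.offDiag, (#{Z ∈ K.powersetCard s | q.1 ∈ Z ∧ q.2 ∈ Z} : ℝ)
      ≤ p ^ 2 * #(K.powersetCard s) := by
    intro q hq
    rw [mem_offDiag] at hq
    have : (#K : ℝ) ^ 2 * #{Z ∈ K.powersetCard s | q.1 ∈ Z ∧ q.2 ∈ Z}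
        ≤ s ^ 2 * #(K.powersetCard s) := by
      exact_mod_cast card_sq_mul_card_powersetCard_pair_le K s (hA hq.1) (hA hq.2.1) hq.2.2
    rw [hp, div_pow, div_mul_eq_mul_div, le_div_iff₀ (by positivity)]
    linarith
  have h5 := sum_le_sum h4
  rw [sum_const, nsmul_eq_mul] at h5
  have h6 := sum_congr rfl h3
  rw [sum_const, nsmul_eq_mul] at h6
  have h7 : (#A.offDiag : ℝ) ≤ (#A : ℝ) ^ 2 := by
    rw [offDiag_card, sq]
    exact_mod_cast Nat.sub_le _ _
  have h8 : (#A.offDiag : ℝ) * (p ^ 2 * #(K.powersetCard s))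
      ≤ (#A : ℝ) ^ 2 * (p ^ 2 * #(K.powersetCard s)) := by gcongr
  rw [h1, h2] at hsum
  have hsum' : (∑ x ∈ A, #{Z ∈ K.powersetCard s | x ∈ Z} : ℝ)
      ≤ #{Z ∈ K.powersetCard s | (Z ∩ A).Nonempty}
        + ∑ q ∈ A.offDiag, (#{Z ∈ K.powersetCard s | q.1 ∈ Z ∧ q.2 ∈ Z} : ℝ) := by
    exact_mod_cast hsum
  linarith

/-- Let `K` be a finite nonempty collection of distinct subsets of a finite
universe `U` such that every element of `U` belongs to at most `r` sets of `K`, `r ≥ 1`.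
Let `0 ≤ s ≤ |K|`, let `Z` be a uniformly random subset of `K` with `|Z| = s`, and let
`p = s/|K|`. Then `E[|ψ(Z)|] ≥ p(1 - pr) · Σ_{S ∈ K} |S|`. The expectation is written as
the average over all `s`-element sub-collections of `K`. -/
theorem stmt_11 {U : Type*} [DecidableEq U] [Fintype U]
    (K : Finset (Finset U)) (hK : K.Nonempty)
    (r : ℕ) (hr : 1 ≤ r)
    (hmult : ∀ u : U, (K.filter (fun S => u ∈ S)).card ≤ r)
    (s : ℕ) (hs : s ≤ K.card)
    (p : ℝ) (hp : p = (s : ℝ) / (K.card : ℝ)) :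
    (∑ Z ∈ K.powersetCard s, ((Z.biUnion id).card : ℝ)) / ((K.powersetCard s).card : ℝ)
      ≥ p * (1 - p * r) * ∑ S ∈ K, (S.card : ℝ) := by
  have hN : (0 : ℝ) < (K.powersetCard s).card := by
    rw [Finset.card_powersetCard]; exact_mod_cast Nat.choose_pos hs
  have hdeg : ∑ S ∈ K, S.card = ∑ u : U, (K.filter (fun S => u ∈ S)).card := by
    simp_rw [Finset.card_filter]
    rw [Finset.sum_comm]
    simp
  have hcov : ∑ Z ∈ K.powersetCard s, (Z.biUnion id).card
      = ∑ u : U, ((K.powersetCard s).filter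
          (fun Z => (Z ∩ K.filter (fun S => u ∈ S)).Nonempty)).card := by
    simp_rw [Finset.card_filter]
    rw [Finset.sum_comm]
    refine Finset.sum_congr rfl fun Z hZ => ?_
    rw [← Finset.card_filter]
    congr 1
    ext u
    have hZK := (Finset.mem_powersetCard.1 hZ).1
    simp only [Finset.mem_biUnion, id, Finset.mem_filter, Finset.mem_univ, true_and,
      Finset.Nonempty, Finset.mem_inter]
    exact ⟨fun ⟨S, h, h'⟩ => ⟨S, h, hZK h, h'⟩, fun ⟨S, h, _, h'⟩ => ⟨S, h, h'⟩⟩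
  have hdeg' : ∑ S ∈ K, (S.card : ℝ) = ∑ u : U, ((K.filter (fun S => u ∈ S)).card : ℝ) := by
    exact_mod_cast hdeg
  have hcov' : ∑ Z ∈ K.powersetCard s, ((Z.biUnion id).card : ℝ)
      = ∑ u : U, (((K.powersetCard s).filter
          (fun Z => (Z ∩ K.filter (fun S => u ∈ S)).Nonempty)).card : ℝ) := by
    exact_mod_cast hcov
  rw [ge_iff_le, le_div_iff₀ hN, hcov', hdeg', Finset.mul_sum, Finset.sum_mul]
  refine Finset.sum_le_sum fun u _ => ?_
  refine le_trans ?_ (hitting_count_ge K _ (Finset.filter_subset _ K) hK s p hp)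
  refine mul_le_mul_of_nonneg_right ?_ hN.le
  have hd : ((K.filter (fun S => u ∈ S)).card : ℝ) ≤ r := by exact_mod_cast hmult u
  have : p ^ 2 * ((K.filter (fun S => u ∈ S)).card : ℝ) * (K.filter (fun S => u ∈ S)).card
      ≤ p ^ 2 * ((K.filter (fun S => u ∈ S)).card : ℝ) * r := by gcongr
  linarith
end

section
/- Let K be a finite nonempty collection of distinct subsets of a finite universe U such that every element of U belongs to at most r sets of K, where r ≥ 1. Let s be an integer with 0 ≤ s ≤ |K|, let Z be a uniformly random subset of K with |Z| = s (all s-element sub-collections of K equally likely), and let p = s/|K|. Then E[|ψ̃(Z)|] ≥ p(1 - pr) · Σ_{S ∈ K} |S|, where ψ̃(Z) is the set of elements uniquely covered by Z. -/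
/-- An element of `K` lies in a uniformly random `s`-element subset of `K` with probability
`s / |K|`. -/
lemma card_filter_mem_powersetCard {α : Type*} [DecidableEq α] {K : Finset α} {s : ℕ} {a : α}
    (ha : a ∈ K) :
    (((K.powersetCard s).filter (fun Z => a ∈ Z)).card : ℝ)
      = (s : ℝ) / K.card * (K.powersetCard s).card := by
  rcases s with _ | m
  · simp
  obtain ⟨n, hn⟩ : ∃ n, K.card = n + 1 :=
    ⟨K.card - 1, by have := Finset.card_pos.2 ⟨a, ha⟩; omega⟩
  have h := Finset.card_filter_powersetCard_subset {a} K (m + 1) (by simpa using ha) (by simp)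
  simp only [Finset.singleton_subset_iff, Finset.card_singleton, hn, Nat.add_sub_cancel] at h
  rw [h, Finset.card_powersetCard, hn]
  have e : ((n : ℝ) + 1) * n.choose m = (n + 1).choose (m + 1) * (m + 1) := by
    exact_mod_cast Nat.add_one_mul_choose_eq n m
  push_cast
  field_simp
  linarith

/-- Two distinct elements of `K` lie together in a uniformly random `s`-element subset of `K` with
probability at most `(s / |K|) ^ 2`. -/
lemma card_filter_pair_powersetCard_le {α : Type*} [DecidableEq α] {K : Finset α} {s : ℕ}
    (hs : s ≤ K.card) {a b : α} (ha : a ∈ K) (hb : b ∈ K) (hab : a ≠ b) :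
    (((K.powersetCard s).filter (fun Z => a ∈ Z ∧ b ∈ Z)).card : ℝ)
      ≤ ((s : ℝ) / K.card) ^ 2 * (K.powersetCard s).card := by
  have hsub : ({a, b} : Finset α) ⊆ K := by
    intro x hx
    simp only [Finset.mem_insert, Finset.mem_singleton] at hx
    rcases hx with rfl | rfl <;> assumption
  by_cases h2 : s < 2
  · have : (K.powersetCard s).filter (fun Z => a ∈ Z ∧ b ∈ Z) = ∅ := by
      refine Finset.filter_eq_empty_iff.2 fun Z hZ h => ?_
      have h1 : 1 < Z.card := Finset.one_lt_card.2 ⟨a, h.1, b, h.2, hab⟩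
      have := (Finset.mem_powersetCard.1 hZ).2
      omega
    rw [this]
    simp only [Finset.card_empty, Nat.cast_zero]
    positivity
  obtain ⟨m, rfl⟩ : ∃ m, s = m + 2 := ⟨s - 2, by omega⟩
  obtain ⟨n, hn⟩ : ∃ n, K.card = n + 2 := ⟨K.card - 2, by omega⟩
  have h := Finset.card_filter_powersetCard_subset {a, b} K (m + 2) hsub
    (by rw [Finset.card_pair hab]; omega)
  simp only [Finset.insert_subset_iff, Finset.singleton_subset_iff, Finset.card_pair hab, hn,
    Nat.add_sub_cancel] at h
  rw [h, Finset.card_powersetCard, hn]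
  have hmn : (m : ℝ) ≤ n := by
    have : m ≤ n := by omega
    exact_mod_cast this
  have e1 : ((n : ℝ) + 1) * n.choose m = (n + 1).choose (m + 1) * (m + 1) := by
    exact_mod_cast Nat.add_one_mul_choose_eq n m
  have e2 : ((n : ℝ) + 2) * (n + 1).choose (m + 1) = (n + 2).choose (m + 2) * (m + 2) := by
    exact_mod_cast Nat.add_one_mul_choose_eq (n + 1) (m + 1)
  -- The exact probability is `(m + 2) / (n + 2) * ((m + 1) / (n + 1))`, and the second factor is
  -- at most the first because `m ≤ n`.
  have e3 : (n.choose m : ℝ)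
      = ((m + 2) / (n + 2)) * ((m + 1) / (n + 1)) * (n + 2).choose (m + 2) := by
    field_simp
    linear_combination ((n : ℝ) + 2) * e1 + ((m : ℝ) + 1) * e2
  have e4 : ((m : ℝ) + 1) / (n + 1) ≤ (m + 2) / (n + 2) := by
    rw [div_le_div_iff₀ (by positivity) (by positivity)]
    nlinarith
  rw [e3, sq]
  push_cast
  gcongr

/-- The indicator of `X = 1` dominates `X - X (X - 1)`, the factorial moment being counted by
ordered pairs of distinct elements of the `X`-element set `A`. -/
lemma card_sub_card_offDiag_le {α : Type*} [DecidableEq α] (A : Finset α) :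
    (A.card : ℝ) - A.offDiag.card ≤ if A.card = 1 then 1 else 0 := by
  have h : (A.offDiag.card : ℝ) = A.card * A.card - A.card := by
    rw [Finset.offDiag_card, Nat.cast_sub (Nat.le_mul_self _), Nat.cast_mul]
  rw [h]
  split_ifs with h1
  · simp [h1]
  · rcases Nat.lt_or_ge A.card 2 with h2 | h2
    · have : A.card = 0 := by omega
      simp [this]
    · have : (2 : ℝ) ≤ A.card := by exact_mod_cast h2
      nlinarith

/-- The probability bound for a single element of the universe: if exactly `d ≤ r` elements of `K`
satisfy `P`, a random `s`-element subset of `K` has exactly one element satisfying `P` with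
probability at least `p (1 - p r) d`, where `p = s / |K|`. -/
lemma le_sum_card_filter_eq_one {α : Type*} [DecidableEq α] {K : Finset α} {s r : ℕ}
    (hs : s ≤ K.card) (P : α → Prop) [DecidablePred P] (hr : (K.filter P).card ≤ r) (p : ℝ)
    (hp : p = (s : ℝ) / K.card) :
    p * (1 - p * r) * (K.filter P).card * (K.powersetCard s).card
      ≤ ∑ Z ∈ K.powersetCard s, if (Z.filter P).card = 1 then (1 : ℝ) else 0 := by
  set F := K.filter P with hF
  have hsub : ∀ Z ∈ K.powersetCard s, Z ⊆ K := fun Z hZ => (Finset.mem_powersetCard.1 hZ).1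
  have first : ∑ Z ∈ K.powersetCard s, ((Z.filter P).card : ℝ)
      = F.card * (p * (K.powersetCard s).card) := by
    calc ∑ Z ∈ K.powersetCard s, ((Z.filter P).card : ℝ)
        = ∑ Z ∈ K.powersetCard s, ∑ a ∈ F, if a ∈ Z then (1 : ℝ) else 0 := by
          refine Finset.sum_congr rfl fun Z hZ => ?_
          rw [Finset.sum_boole]
          congr 2
          ext a
          have := @hsub Z hZ a
          simp only [hF, Finset.mem_filter]
          tauto
      _ = ∑ a ∈ F, p * (K.powersetCard s).card := by
          rw [Finset.sum_comm]
          refine Finset.sum_congr rfl fun a ha => ?_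
          rw [Finset.sum_boole, card_filter_mem_powersetCard (Finset.mem_filter.1 ha).1, hp]
      _ = _ := by rw [Finset.sum_const, nsmul_eq_mul]
  have second : ∑ Z ∈ K.powersetCard s, ((Z.filter P).offDiag.card : ℝ)
      ≤ F.offDiag.card * (p ^ 2 * (K.powersetCard s).card) := by
    calc ∑ Z ∈ K.powersetCard s, ((Z.filter P).offDiag.card : ℝ)
        = ∑ Z ∈ K.powersetCard s, ∑ x ∈ F.offDiag,
            if x.1 ∈ Z ∧ x.2 ∈ Z then (1 : ℝ) else 0 := by
          refine Finset.sum_congr rfl fun Z hZ => ?_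
          rw [Finset.sum_boole]
          congr 2
          ext x
          have h1 := @hsub Z hZ x.1
          have h2 := @hsub Z hZ x.2
          simp only [hF, Finset.mem_filter, Finset.mem_offDiag]
          tauto
      _ ≤ ∑ x ∈ F.offDiag, p ^ 2 * (K.powersetCard s).card := by
          rw [Finset.sum_comm]
          refine Finset.sum_le_sum fun x hx => ?_
          obtain ⟨h1, h2, h3⟩ := Finset.mem_offDiag.1 hx
          rw [Finset.sum_boole, hp]
          exact card_filter_pair_powersetCard_le hs (Finset.mem_filter.1 h1).1
            (Finset.mem_filter.1 h2).1 h3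
      _ = _ := by rw [Finset.sum_const, nsmul_eq_mul]
  have hpairs : (F.offDiag.card : ℝ) ≤ r * F.card := by
    have : F.offDiag.card ≤ r * F.card := by
      rw [Finset.offDiag_card]
      exact (Nat.sub_le _ _).trans (Nat.mul_le_mul_right _ hr)
    exact_mod_cast this
  calc p * (1 - p * r) * F.card * (K.powersetCard s).card
      = F.card * (p * (K.powersetCard s).card)
        - r * F.card * (p ^ 2 * (K.powersetCard s).card) := by ring
    _ ≤ F.card * (p * (K.powersetCard s).card)
        - F.offDiag.card * (p ^ 2 * (K.powersetCard s).card) := by gcongr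
    _ ≤ ∑ Z ∈ K.powersetCard s, (((Z.filter P).card : ℝ) - (Z.filter P).offDiag.card) := by
        rw [Finset.sum_sub_distrib, first]
        gcongr
    _ ≤ _ := Finset.sum_le_sum fun Z _ => card_sub_card_offDiag_le _

lemma uniqueCover_card {U : Type*} [DecidableEq U] [Fintype U] (C : Finset (Finset U)) :
    ((uniqueCover C).card : ℝ)
      = ∑ u : U, if (C.filter (fun S => u ∈ S)).card = 1 then (1 : ℝ) else 0 := by
  rw [Finset.sum_boole]
  congr 2
  ext u
  simp only [uniqueCover, Finset.mem_filter, Finset.mem_univ, true_and, Finset.mem_biUnion, id,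
    and_iff_right_iff_imp]
  intro h
  obtain ⟨S, hS⟩ := Finset.card_pos.1 (h ▸ Nat.one_pos)
  exact ⟨S, Finset.mem_filter.1 hS⟩

/-- Let `K` be a finite nonempty collection of distinct subsets of a finite
universe `U` such that every element of `U` belongs to at most `r` sets of `K`, `r ≥ 1`.
Let `0 ≤ s ≤ |K|`, let `Z` be a uniformly random subset of `K` with `|Z| = s`, and let
`p = s/|K|`. Then `E[|ψ̃(Z)|] ≥ p(1 - pr) · Σ_{S ∈ K} |S|`, where `ψ̃(Z)` is the set of
elements uniquely covered by `Z`. The expectation is written as the average over all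
`s`-element sub-collections of `K`. -/
theorem stmt_12 {U : Type*} [DecidableEq U] [Fintype U]
    (K : Finset (Finset U)) (hK : K.Nonempty)
    (r : ℕ) (hr : 1 ≤ r)
    (hmult : ∀ u : U, (K.filter (fun S => u ∈ S)).card ≤ r)
    (s : ℕ) (hs : s ≤ K.card)
    (p : ℝ) (hp : p = (s : ℝ) / (K.card : ℝ)) :
    (∑ Z ∈ K.powersetCard s, ((uniqueCover Z).card : ℝ)) / ((K.powersetCard s).card : ℝ)
      ≥ p * (1 - p * r) * ∑ S ∈ K, (S.card : ℝ) := by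
  have hpos : (0 : ℝ) < (K.powersetCard s).card := by
    exact_mod_cast Finset.card_pos.2 (Finset.powersetCard_nonempty.2 hs)
  have hdeg : ∑ S ∈ K, (S.card : ℝ) = ∑ u : U, ((K.filter (fun S => u ∈ S)).card : ℝ) := by
    simp_rw [← Finset.sum_boole]
    rw [Finset.sum_comm]
    simp
  rw [ge_iff_le, le_div_iff₀ hpos, hdeg, Finset.mul_sum, Finset.sum_mul]
  simp_rw [uniqueCover_card]
  rw [Finset.sum_comm]
  exact Finset.sum_le_sum fun u _ => le_sum_card_filter_eq_one hs (fun S => u ∈ S) (hmult u) p hp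
end

section
/- Let d ≥ 1 and k ≥ 1 be integers and set c = 10d²k. Let C be a finite collection of at most k distinct subsets of a finite universe U, each of cardinality at most d, and let S ∈ C. If χ : U → {1, ..., c} is chosen uniformly at random (all c^{|U|} functions equally likely), then the probability that S is not good with respect to C and χ is at most 1/10, where S is good if χ is injective on S and no element of ψ(C) \ S has a color lying in χ(S). -/
/-!
A union bound over monochromatic pairs. If `S` is not good, then some `u ∈ S` and some
`v ≠ u` in `ψ(C)` receive the same colour: `v ∈ S` if injectivity fails, and `v ∉ S` if
`χ(S)` meets `χ(ψ(C) \ S)`. There are at most `|S| * |ψ(C)| ≤ d * (k * d)` such pairs, and each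
is monochromatic with probability at most `1 / c` (`card_mono_pair_mul_le`), so the total is at
most `d² k / c = 1 / 10`.
-/

open Classical

/-- Two distinct points get the same colour with probability at most `1 / c`: recolouring `u`
arbitrarily is injective on pairs (colouring with `χ u = χ v`, new colour of `u`), since the old
colour of `u` can be read off at `v`. -/
lemma card_mono_pair_mul_le {U : Type*} [DecidableEq U] [Fintype U] (c : ℕ) {u v : U}
    (h : u ≠ v) :
    (Finset.univ.filter (fun χ : U → Fin c => χ u = χ v)).card * c
      ≤ Fintype.card (U → Fin c) := by
  have key : ((Finset.univ.filter (fun χ : U → Fin c => χ u = χ v)) ×ˢ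
      (Finset.univ : Finset (Fin c))).card ≤ (Finset.univ : Finset (U → Fin c)).card := by
    apply Finset.card_le_card_of_injOn (fun p => Function.update p.1 u p.2)
    · intro _ _
      simp
    · rintro ⟨χ, a⟩ hχ ⟨χ', a'⟩ hχ' he
      simp only [Finset.coe_product, Set.mem_prod, Finset.mem_coe, Finset.mem_filter,
        Finset.mem_univ, true_and, and_true] at hχ hχ'
      have hne : ∀ w, w ≠ u → χ w = χ' w := fun w hw => by
        simpa [Function.update_of_ne hw] using congrFun he w
      have ha : a = a' := by simpa using congrFun he u
      have hf : χ = χ' := by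
        funext w
        by_cases hw : w = u
        · rw [hw, hχ, hχ', hne v h.symm]
        · exact hne w hw
      rw [ha, hf]
  simpa [Finset.card_product] using key

/-- Let `d ≥ 1` and `k ≥ 1` be integers and set `c = 10d²k`. Let `C` be a
finite collection of at most `k` distinct subsets of a finite universe `U`, each of
cardinality at most `d`, and let `S ∈ C`. If `χ : U → {1,…,c}` is chosen uniformly at random
(all `c^|U|` functions equally likely), then the probability that `S` is not good with
respect to `C` and `χ` is at most `1/10`, where `S` is good if `χ` is injective on `S` and
`χ(S) ∩ χ(ψ(C) \ S) = ∅`. The probability is written as the fraction of colorings `χ` for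
which `S` is not good. -/
theorem stmt_16 {U : Type*} [DecidableEq U] [Fintype U]
    (d k : ℕ) (hd : 1 ≤ d) (hk : 1 ≤ k)
    (c : ℕ) (hc : c = 10 * d ^ 2 * k)
    (C : Finset (Finset U)) (hCk : C.card ≤ k) (hCd : ∀ A ∈ C, A.card ≤ d)
    (S : Finset U) (hS : S ∈ C) :
    ((Finset.univ.filter (fun χ : U → Fin c =>
        ¬ (Set.InjOn χ ↑S ∧
           Disjoint (S.image χ) ((C.biUnion id \ S).image χ)))).card : ℝ)
      / (Fintype.card (U → Fin c) : ℝ) ≤ 1 / 10 := by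
  set N := Fintype.card (U → Fin c) with hN
  set P := (S ×ˢ C.biUnion id).filter (fun p => p.1 ≠ p.2) with hP
  set B := Finset.univ.filter (fun χ : U → Fin c =>
        ¬ (Set.InjOn χ ↑S ∧
           Disjoint (S.image χ) ((C.biUnion id \ S).image χ))) with hB
  have hsub : B ⊆ P.biUnion
      (fun p => Finset.univ.filter (fun χ : U → Fin c => χ p.1 = χ p.2)) := by
    intro χ hχ
    have hbad := (Finset.mem_filter.mp hχ).2
    suffices ∃ u ∈ S, ∃ v ∈ C.biUnion id, u ≠ v ∧ χ u = χ v by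
      obtain ⟨u, hu, v, hv, huv, he⟩ := this
      exact Finset.mem_biUnion.mpr ⟨(u, v), Finset.mem_filter.mpr
        ⟨Finset.mem_product.mpr ⟨hu, hv⟩, huv⟩, Finset.mem_filter.mpr ⟨Finset.mem_univ _, he⟩⟩
    by_contra! hno
    apply hbad
    constructor
    · intro u hu v hv he
      by_contra huv
      exact hno u hu v (Finset.mem_biUnion.mpr ⟨S, hS, hv⟩) huv he
    · rw [Finset.disjoint_left]
      intro a ha hb
      obtain ⟨u, hu, rfl⟩ := Finset.mem_image.mp ha
      obtain ⟨v, hv, he⟩ := Finset.mem_image.mp hb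
      obtain ⟨hv, hvS⟩ := Finset.mem_sdiff.mp hv
      exact hno u hu v hv (fun h => hvS (h ▸ hu)) he.symm
  have hPcard : P.card ≤ d * (k * d) :=
    calc P.card ≤ (S ×ˢ C.biUnion id).card := Finset.card_filter_le _ _
      _ = S.card * (C.biUnion id).card := Finset.card_product _ _
      _ ≤ d * (k * d) := Nat.mul_le_mul (hCd S hS)
          ((Finset.card_biUnion_le_card_mul C id d hCd).trans (Nat.mul_le_mul_right d hCk))
  have hBc : B.card * c ≤ d * (k * d) * N :=
    calc B.card * c
        ≤ (∑ p ∈ P, (Finset.univ.filter (fun χ : U → Fin c => χ p.1 = χ p.2)).card) * c :=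
          Nat.mul_le_mul_right c ((Finset.card_le_card hsub).trans Finset.card_biUnion_le)
      _ = ∑ p ∈ P, (Finset.univ.filter (fun χ : U → Fin c => χ p.1 = χ p.2)).card * c :=
          Finset.sum_mul _ _ _
      _ ≤ ∑ _p ∈ P, N := Finset.sum_le_sum fun p hp =>
          card_mono_pair_mul_le c (Finset.mem_filter.mp hp).2
      _ = P.card * N := by simp
      _ ≤ d * (k * d) * N := Nat.mul_le_mul_right N hPcard
  have hBN : B.card * 10 ≤ N := by
    have hpos : 0 < d * (k * d) := by positivity
    refine Nat.le_of_mul_le_mul_left ?_ hpos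
    calc d * (k * d) * (B.card * 10) = B.card * (10 * d ^ 2 * k) := by ring
      _ = B.card * c := congrArg (B.card * ·) hc.symm
      _ ≤ d * (k * d) * N := hBc
  have hBN' : (B.card : ℝ) * 10 ≤ N := by exact_mod_cast hBN
  exact div_le_of_le_mul₀ (by positivity) (by norm_num) (by linarith)
end

section
/- Let d ≥ 1 and k ≥ 1 be integers and set c = 10d²k. Let C be a finite collection of at most k distinct subsets of a finite universe U, each of cardinality at most d, and let C' ⊆ C. If χ : U → {1, ..., c} is chosen uniformly at random (all c^{|U|} functions equally likely), then with probability at least 1/2 the number of sets S ∈ C' that are good with respect to C and χ is at least (4/5)|C'|. -/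
/-!
A set `S ∈ C` can fail to be good only if some `u ∈ S` and some other covered element `v` get the
same color. There are at most `d` choices for `u` and `d * k` choices for `v`, and each pair collides
with probability `1 / c`, so by the union bound (`ten_mul_card_bad_le`) `S` fails with probability
at most `d ^ 2 * k / c = 1 / 10`. The expected number of failing sets in `C'` is thus at most
`|C'| / 10`, and Markov's inequality (`two_mul_card_few_le`) shows that more than `|C'| / 5` of
them fail with probability at most `1 / 2`. All estimates are carried out on cardinalities.
-/

open Classical

/-- Two distinct elements receive the same color with probability at most `1 / c`: recoloring `u`
arbitrarily is injective on pairs (new color, coloring with `χ u = χ v`), because the old color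
of `u` can be read off at `v`. -/
lemma mul_card_collision_le {U : Type*} [DecidableEq U] [Fintype U] (c : ℕ) {u v : U}
    (huv : u ≠ v) :
    c * (Finset.univ.filter (fun χ : U → Fin c => χ u = χ v)).card
      ≤ Fintype.card (U → Fin c) := by
  have key : ((Finset.univ : Finset (Fin c)) ×ˢ
      Finset.univ.filter (fun χ : U → Fin c => χ u = χ v)).card
      ≤ (Finset.univ : Finset (U → Fin c)).card := by
    refine Finset.card_le_card_of_injOn (fun p => Function.update p.2 u p.1)
      (fun _ _ => Finset.mem_coe.2 (Finset.mem_univ _)) ?_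
    rintro ⟨a, χ⟩ h1 ⟨b, η⟩ h2 h
    simp only [Finset.coe_product, Finset.coe_univ, Set.mem_prod, Finset.coe_filter,
      Set.mem_ofPred_eq, Finset.mem_univ, true_and, Set.mem_univ] at h1 h2
    have hpt : ∀ x, Function.update χ u a x = Function.update η u b x := fun x => congrFun h x
    have hab : a = b := by simpa using hpt u
    have hne : ∀ x, x ≠ u → χ x = η x := fun x hx => by
      simpa [Function.update_of_ne hx] using hpt x
    have hχ : χ = η := by
      funext x
      by_cases hx : x = u
      · rw [hx, h1, h2, hne v huv.symm]
      · exact hne x hx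
    rw [hab, hχ]
  simpa [Finset.card_product] using key

/-- Union bound over the pairs `(u, v)`: a fixed `S ∈ C` fails to be good with probability at most
`1 / 10`. -/
lemma ten_mul_card_bad_le {U : Type*} [DecidableEq U] [Fintype U]
    (d k c : ℕ) (hd : 1 ≤ d) (hk : 1 ≤ k) (hc : c = 10 * d ^ 2 * k)
    (C : Finset (Finset U)) (hCk : C.card ≤ k) (hCd : ∀ A ∈ C, A.card ≤ d)
    (S : Finset U) (hS : S ∈ C) :
    10 * (Finset.univ.filter (fun χ : U → Fin c => ¬ (Set.InjOn χ ↑S ∧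
              Disjoint (S.image χ) ((C.biUnion id \ S).image χ)))).card
      ≤ Fintype.card (U → Fin c) := by
  set B := Finset.univ.filter (fun χ : U → Fin c => ¬ (Set.InjOn χ ↑S ∧
              Disjoint (S.image χ) ((C.biUnion id \ S).image χ))) with hB
  set P := (S ×ˢ C.biUnion id).filter (fun p => p.1 ≠ p.2) with hP
  have hsub : B ⊆ P.biUnion (fun p => Finset.univ.filter (fun χ : U → Fin c => χ p.1 = χ p.2)) := by
    intro χ hχ
    rw [hB, Finset.mem_filter] at hχ
    by_contra hcon
    simp only [hP, Finset.mem_biUnion, Finset.mem_filter, Finset.mem_product, Finset.mem_univ,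
      true_and, not_exists, not_and, id, Prod.forall] at hcon
    refine hχ.2 ⟨fun u hu v hv huv => ?_, ?_⟩
    · by_contra hne
      exact hcon u v ⟨⟨hu, S, hS, hv⟩, hne⟩ huv
    · rw [Finset.disjoint_left]
      intro a ha hb
      obtain ⟨u, hu, rfl⟩ := Finset.mem_image.1 ha
      obtain ⟨v, hv, hvu⟩ := Finset.mem_image.1 hb
      obtain ⟨hv1, hv2⟩ := Finset.mem_sdiff.1 hv
      obtain ⟨A, hA, hvA⟩ := Finset.mem_biUnion.1 hv1
      exact hcon u v ⟨⟨hu, A, hA, hvA⟩, fun h => hv2 (h ▸ hu)⟩ hvu.symm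
  have hPcard : P.card ≤ d ^ 2 * k := by
    have h1 : (C.biUnion id).card ≤ k * d :=
      (Finset.card_biUnion_le_card_mul C id d hCd).trans (Nat.mul_le_mul_right d hCk)
    calc P.card ≤ (S ×ˢ C.biUnion id).card := Finset.card_filter_le _ _
      _ = S.card * (C.biUnion id).card := Finset.card_product _ _
      _ ≤ d * (k * d) := Nat.mul_le_mul (hCd S hS) h1
      _ = d ^ 2 * k := by ring
  have hsum : c * B.card ≤ (d ^ 2 * k) * Fintype.card (U → Fin c) := by
    calc c * B.card
        ≤ c * ∑ p ∈ P, (Finset.univ.filter (fun χ : U → Fin c => χ p.1 = χ p.2)).card :=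
          Nat.mul_le_mul_left c ((Finset.card_le_card hsub).trans Finset.card_biUnion_le)
      _ = ∑ p ∈ P, c * (Finset.univ.filter (fun χ : U → Fin c => χ p.1 = χ p.2)).card :=
          Finset.mul_sum _ _ _
      _ ≤ ∑ _p ∈ P, Fintype.card (U → Fin c) :=
          Finset.sum_le_sum fun p hp => mul_card_collision_le c (Finset.mem_filter.1 hp).2
      _ = P.card * Fintype.card (U → Fin c) := by rw [Finset.sum_const, smul_eq_mul]
      _ ≤ _ := Nat.mul_le_mul_right _ hPcard
  have hpos : 0 < d ^ 2 * k := by positivity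
  refine Nat.le_of_mul_le_mul_left (?_ : (d ^ 2 * k) * _ ≤ (d ^ 2 * k) * _) hpos
  calc (d ^ 2 * k) * (10 * B.card) = (10 * d ^ 2 * k) * B.card := by ring
    _ = c * B.card := congrArg (· * B.card) hc.symm
    _ ≤ _ := hsum

/-- Markov's inequality: if each `i ∈ T` fails with probability at most `1 / 10`, then fewer than
`4 / 5` of the elements of `T` succeed with probability at most `1 / 2`. -/
lemma two_mul_card_few_le {Ω ι : Type*} [Fintype Ω] (T : Finset ι) (G : Ω → ι → Prop)
    (h : ∀ i ∈ T, 10 * (Finset.univ.filter (fun ω => ¬ G ω i)).card ≤ Fintype.card Ω) :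
    2 * (Finset.univ.filter (fun ω => 5 * (T.filter (G ω)).card < 4 * T.card)).card
      ≤ Fintype.card Ω := by
  set F := Finset.univ.filter (fun ω => 5 * (T.filter (G ω)).card < 4 * T.card) with hF
  rcases Nat.eq_zero_or_pos T.card with h0 | hpos
  · have : F = ∅ := by simp [hF, h0]
    simp [this]
  have hbad : ∀ ω ∈ F, T.card ≤ 5 * (T.filter (fun i => ¬ G ω i)).card := by
    intro ω hω
    have h1 := (Finset.mem_filter.1 hω).2
    have h2 := Finset.card_filter_add_card_filter_not (s := T) (G ω)
    omega
  have hswap : ∑ ω : Ω, (T.filter (fun i => ¬ G ω i)).card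
      = ∑ i ∈ T, (Finset.univ.filter (fun ω => ¬ G ω i)).card := by
    simp only [Finset.card_filter]
    exact Finset.sum_comm
  refine Nat.le_of_mul_le_mul_left (?_ : T.card * _ ≤ T.card * _) hpos
  calc T.card * (2 * F.card) = 2 * ∑ _ω ∈ F, T.card := by
        rw [Finset.sum_const, smul_eq_mul]; ring
    _ ≤ 2 * ∑ ω ∈ F, 5 * (T.filter (fun i => ¬ G ω i)).card :=
        Nat.mul_le_mul_left 2 (Finset.sum_le_sum hbad)
    _ ≤ 2 * ∑ ω : Ω, 5 * (T.filter (fun i => ¬ G ω i)).card :=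
        Nat.mul_le_mul_left 2 (Finset.sum_le_sum_of_subset (Finset.subset_univ F))
    _ = ∑ i ∈ T, 10 * (Finset.univ.filter (fun ω => ¬ G ω i)).card := by
        rw [← Finset.mul_sum, hswap, ← Finset.mul_sum]; ring
    _ ≤ ∑ _i ∈ T, Fintype.card Ω := Finset.sum_le_sum h
    _ = T.card * Fintype.card Ω := by rw [Finset.sum_const, smul_eq_mul]

/-- Let `d ≥ 1` and `k ≥ 1` be integers and set `c = 10d²k`. Let `C` be a
finite collection of at most `k` distinct subsets of a finite universe `U`, each of
cardinality at most `d`, and let `C' ⊆ C`. If `χ : U → {1,…,c}` is chosen uniformly at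
random (all `c^|U|` functions equally likely), then with probability at least `1/2` the
number of sets `S ∈ C'` that are good with respect to `C` and `χ` is at least `(4/5)|C'|`,
where `S` is good if `χ` is injective on `S` and `χ(S) ∩ χ(ψ(C) \ S) = ∅`. The probability
is written as the fraction of colorings `χ` with at least `(4/5)|C'|` good sets in `C'`. -/
theorem stmt_17 {U : Type*} [DecidableEq U] [Fintype U]
    (d k : ℕ) (hd : 1 ≤ d) (hk : 1 ≤ k)
    (c : ℕ) (hc : c = 10 * d ^ 2 * k)
    (C : Finset (Finset U)) (hCk : C.card ≤ k) (hCd : ∀ A ∈ C, A.card ≤ d)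
    (C' : Finset (Finset U)) (hC' : C' ⊆ C) :
    ((Finset.univ.filter (fun χ : U → Fin c =>
        (4 / 5 : ℝ) * (C'.card : ℝ) ≤
          ((C'.filter (fun S : Finset U => Set.InjOn χ ↑S ∧
              Disjoint (S.image χ) ((C.biUnion id \ S).image χ))).card : ℝ))).card : ℝ)
      / (Fintype.card (U → Fin c) : ℝ) ≥ 1 / 2 := by
  have hcpos : 0 < c := by rw [hc]; positivity
  have : Nonempty (Fin c) := ⟨⟨0, hcpos⟩⟩
  have hN : (0 : ℝ) < (Fintype.card (U → Fin c) : ℝ) := by exact_mod_cast Fintype.card_pos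
  have hM := two_mul_card_few_le C' (fun (χ : U → Fin c) (S : Finset U) => Set.InjOn χ ↑S ∧
      Disjoint (S.image χ) ((C.biUnion id \ S).image χ))
    (fun S hS => by
      convert ten_mul_card_bad_le d k c hd hk hc C hCk hCd S (hC' hS))
  rw [ge_iff_le, le_div_iff₀ hN]
  have hsplit := Finset.card_filter_add_card_filter_not
    (s := (Finset.univ : Finset (U → Fin c))) (fun χ : U → Fin c =>
        (4 / 5 : ℝ) * (C'.card : ℝ) ≤
          ((C'.filter (fun S : Finset U => Set.InjOn χ ↑S ∧
              Disjoint (S.image χ) ((C.biUnion id \ S).image χ))).card : ℝ))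
  have hle : (Finset.univ.filter (fun χ : U → Fin c => ¬
        (4 / 5 : ℝ) * (C'.card : ℝ) ≤
          ((C'.filter (fun S : Finset U => Set.InjOn χ ↑S ∧
              Disjoint (S.image χ) ((C.biUnion id \ S).image χ))).card : ℝ))).card ≤ _ :=
    Finset.card_le_card (Finset.monotone_filter_right _ fun χ _ hχ => by
      rw [not_le] at hχ
      have h5 : (5 : ℝ) * ((C'.filter (fun S : Finset U => Set.InjOn χ ↑S ∧
              Disjoint (S.image χ) ((C.biUnion id \ S).image χ))).card : ℝ)
              < 4 * (C'.card : ℝ) := by linarith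
      exact_mod_cast h5)
  have h2 := (Nat.mul_le_mul_left 2 hle).trans (le_of_eq_of_le (by congr!) hM)
  rw [Finset.card_univ] at hsplit
  have hsplit' := congrArg (Nat.cast : ℕ → ℝ) hsplit
  have h2' : ((2 * _ : ℕ) : ℝ) ≤ _ := Nat.cast_le.2 h2
  push_cast at hsplit' h2'
  linarith
end
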